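/- arXiv:1503.00345 — 8 statements merged into one kernel-verified Lean document; each statement's English description precedes it below -/
import Mathlib

section
/- Let X be a nonnegative random variable with E[X] < ∞ and log X integrable, and let a ≥ 0 be a real number such that X ≥ a almost surely. Then E[X] − exp(E[log X]) ≤ max(2·Var(√X), E[(√X − √a)²]). -/
open MeasureTheory ProbabilityTheory Real

/-!
Put `Y = √X`, `m = E Y`, `v = Var Y` and `e² = max(v, (m - √a)²)`. Since `E X = v + m²` and
`E (Y - √a)² = v + (m - √a)²`, the claim says `m² - e² ≤ exp (2 E log Y)`. If `m ≤ e` the left side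
is nonpositive. Otherwise `Y ≥ √a ≥ m - e > 0` and `Var Y ≤ e²`, and among such variables `E log Y`
is smallest for the uniform law on `{m - e, m + e}`: because `log` has a convex derivative, the
quadratic that agrees with it at `m - e` and is tangent to it at `m + e` lies below it on
`[m - e, ∞)`. This quadratic is concave, so as `Var Y ≤ e²` its expectation is at least its mean
over the two nodes.
-/

section Hermite

variable {f f' : ℝ → ℝ} {l t y : ℝ}

lemma nonneg_of_convexOn_deriv (hf : ContinuousOn f (Set.Ici l))
    (hff' : ∀ x ∈ Set.Ioi l, HasDerivAt f (f' x) x) (hf' : ConvexOn ℝ (Set.Ioi l) f')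
    (hlt : l < t) (hfl : 0 ≤ f l) (hft : f t = 0) (hf't : f' t = 0) (hly : l ≤ y) : 0 ≤ f y := by
  have exists_deriv_eq {u v : ℝ} (hlu : l ≤ u) (huv : u < v) :
      ∃ c ∈ Set.Ioo u v, f' c = (f v - f u) / (v - u) :=
    exists_hasDerivAt_eq_slope f f' huv
      (hf.mono (Set.Icc_subset_Ici_self.trans (Set.Ici_subset_Ici.2 hlu)))
      fun x hx ↦ hff' x (hlu.trans_lt hx.1)
  by_contra! hfy
  rcases lt_trichotomy y t with hyt | rfl | hty
  · have hly' : l < y := hly.lt_of_ne (by rintro rfl; exact hfl.not_gt hfy)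
    obtain ⟨c, ⟨hlc, hcy⟩, hc⟩ := exists_deriv_eq le_rfl hly'
    obtain ⟨d, ⟨hyd, hdt⟩, hd⟩ := exists_deriv_eq hly hyt
    have hc_neg : f' c < 0 := hc ▸ div_neg_of_neg_of_pos (by linarith) (by linarith)
    have hd_pos : 0 < f' d := hd ▸ div_pos (by linarith) (by linarith)
    have hdt_le : f' d ≤ f' t :=
      hf'.le_right_of_left_le'' hlc hlt (hcy.trans hyd) hdt.le (hc_neg.trans hd_pos).le
    linarith
  · exact hfy.ne hft
  · obtain ⟨c, ⟨hlc, hct⟩, hc⟩ := exists_deriv_eq le_rfl hlt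
    obtain ⟨d, ⟨htd, hdy⟩, hd⟩ := exists_deriv_eq hlt.le hty
    have hc_nonpos : f' c ≤ 0 := hc ▸ div_nonpos_of_nonpos_of_nonneg (by linarith) (by linarith)
    have hd_neg : f' d < 0 := hd ▸ div_neg_of_neg_of_pos (by linarith) (by linarith)
    have htd_le : f' t ≤ f' d :=
      hf'.le_right_of_left_le'' hlc (hlt.trans htd) hct htd.le (hc_nonpos.trans hf't.ge)
    linarith

/-- The quadratic with the value and slope of `f` at `t` and the value of `f` at `l`, for `f'` the
derivative of `f` and `l ≠ t`. -/
noncomputable def hermiteQuadratic (f f' : ℝ → ℝ) (l t y : ℝ) : ℝ :=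
  f t + f' t * (y - t) + (f l - f t - f' t * (l - t)) / (l - t) ^ 2 * (y - t) ^ 2

lemma hermiteQuadratic_le_of_convexOn_deriv (hf : ContinuousOn f (Set.Ici l))
    (hff' : ∀ x ∈ Set.Ioi l, HasDerivAt f (f' x) x) (hf' : ConvexOn ℝ (Set.Ioi l) f')
    (hlt : l < t) (hly : l ≤ y) : hermiteQuadratic f f' l t y ≤ f y := by
  set C := (f l - f t - f' t * (l - t)) / (l - t) ^ 2
  have hderiv (x : ℝ) : HasDerivAt (hermiteQuadratic f f' l t) (f' t + C * (2 * (x - t))) x := by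
    have hsub : HasDerivAt (fun z ↦ z - t) 1 x := (hasDerivAt_id x).sub_const t
    exact (((hsub.const_mul (f' t)).const_add (f t)).add ((hsub.pow 2).const_mul C)).congr_deriv
      (by simp)
  have hl : hermiteQuadratic f f' l t l = f l := by
    have hne : l - t ≠ 0 := sub_ne_zero.2 hlt.ne
    simp only [hermiteQuadratic]
    field_simp
    ring
  have hdiff : ConvexOn ℝ (Set.Ioi l) fun x ↦ f' x - (f' t + C * (2 * (x - t))) := by
    refine hf'.sub ⟨hf'.1, fun x _ z _ p q _ _ hpq ↦ le_of_eq ?_⟩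
    simp only [smul_eq_mul]
    linear_combination (f' t - 2 * C * t) * hpq
  refine sub_nonneg.1 <| nonneg_of_convexOn_deriv (f := f - hermiteQuadratic f f' l t)
    (hf.sub fun x _ ↦ (hderiv x).continuousAt.continuousWithinAt)
    (fun x hx ↦ (hff' x hx).sub (hderiv x)) hdiff hlt ?_ ?_ ?_ hly
  · simp [hl]
  · simp [hermiteQuadratic]
  · simp

end Hermite

section Probability

variable {Ω : Type*} [MeasurableSpace Ω] {μ : Measure Ω} {Y : Ω → ℝ}

lemma integrable_hermiteQuadratic [IsFiniteMeasure μ] (hY : MemLp Y 2 μ) (f f' : ℝ → ℝ)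
    (l t : ℝ) : Integrable (fun ω ↦ hermiteQuadratic f f' l t (Y ω)) μ :=
  have hsub : MemLp (fun ω ↦ Y ω - t) 2 μ := hY.sub (memLp_const t)
  ((integrable_const _).add ((hsub.integrable one_le_two).const_mul _)).add
    (hsub.integrable_sq.const_mul _)

variable [IsProbabilityMeasure μ]

lemma integral_sub_const_sq (hY : MemLp Y 2 μ) (c : ℝ) :
    ∫ ω, (Y ω - c) ^ 2 ∂μ = Var[Y; μ] + (μ[Y] - c) ^ 2 := by
  have hmean : ∫ ω, (Y ω - c) ∂μ = μ[Y] - c := by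
    simp [integral_sub (hY.integrable one_le_two) (integrable_const c)]
  have hvar := variance_eq_sub (hY.sub (memLp_const c))
  simp only [Pi.sub_def, Pi.pow_def, hmean, variance_sub_const hY.aestronglyMeasurable] at hvar
  linarith

lemma integral_hermiteQuadratic (hY : MemLp Y 2 μ) (f f' : ℝ → ℝ) (l t : ℝ) :
    ∫ ω, hermiteQuadratic f f' l t (Y ω) ∂μ = f t + f' t * (μ[Y] - t) +
      (f l - f t - f' t * (l - t)) / (l - t) ^ 2 * (Var[Y; μ] + (μ[Y] - t) ^ 2) := by
  have hYi : Integrable Y μ := hY.integrable one_le_two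
  have hlin : Integrable (fun ω ↦ f' t * (Y ω - t)) μ :=
    (hYi.sub (integrable_const t)).const_mul _
  have haff : Integrable (fun ω ↦ f t + f' t * (Y ω - t)) μ := (integrable_const _).add hlin
  have hsq : Integrable (fun ω ↦ (Y ω - t) ^ 2) μ := (hY.sub (memLp_const t)).integrable_sq
  simp only [hermiteQuadratic]
  rw [integral_add haff (hsq.const_mul _), integral_add (integrable_const _) hlin,
    integral_const_mul, integral_const_mul, integral_sub hYi (integrable_const t),
    integral_sub_const_sq hY]
  simp

/-- Equality holds when `Y` is uniform on the two points `μ[Y] - e` and `μ[Y] + e`. -/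
theorem two_point_mean_le_integral_of_convexOn_deriv {f f' : ℝ → ℝ} {e : ℝ} (he : 0 ≤ e)
    (hY : MemLp Y 2 μ) (hfY : Integrable (fun ω ↦ f (Y ω)) μ)
    (hf : ContinuousOn f (Set.Ici (μ[Y] - e)))
    (hff' : ∀ x ∈ Set.Ioi (μ[Y] - e), HasDerivAt f (f' x) x)
    (hfc : ConcaveOn ℝ (Set.Ici (μ[Y] - e)) f) (hf' : ConvexOn ℝ (Set.Ioi (μ[Y] - e)) f')
    (hle : ∀ᵐ ω ∂μ, μ[Y] - e ≤ Y ω) (hvar : Var[Y; μ] ≤ e ^ 2) :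
    (f (μ[Y] - e) + f (μ[Y] + e)) / 2 ≤ ∫ ω, f (Y ω) ∂μ := by
  set m := μ[Y]
  rcases he.eq_or_lt with rfl | he
  · have hconst : Y =ᵐ[μ] fun _ ↦ m :=
      ae_eq_integral_of_variance_eq_zero hY
        (le_antisymm (by simpa using hvar) (variance_nonneg Y μ))
    have hint : ∫ ω, f (Y ω) ∂μ = f m := by
      simpa using integral_congr_ae (hconst.fun_comp f)
    simp [hint]
  have hlt : m - e < m + e := by linarith
  set C := (f (m - e) - f (m + e) - f' (m + e) * (m - e - (m + e))) / (m - e - (m + e)) ^ 2 with hC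
  have hC_nonpos : C ≤ 0 := by
    have hslope := hfc.le_slope_of_hasDerivAt (Set.mem_Ici.2 le_rfl) (Set.mem_Ici.2 hlt.le) hlt
      (hff' _ hlt)
    rw [slope_def_field, le_div_iff₀ (sub_pos.2 hlt)] at hslope
    exact div_nonpos_of_nonpos_of_nonneg (by linarith) (sq_nonneg _)
  calc (f (m - e) + f (m + e)) / 2
      = f (m + e) + f' (m + e) * (m - (m + e)) + C * (e ^ 2 + (m - (m + e)) ^ 2) := by
        have hnodes : m - e - (m + e) = -(2 * e) := by ring
        rw [hC, hnodes]
        field_simp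
        ring
    _ ≤ f (m + e) + f' (m + e) * (m - (m + e)) + C * (Var[Y; μ] + (m - (m + e)) ^ 2) := by
        linarith [mul_le_mul_of_nonpos_left hvar hC_nonpos]
    _ = ∫ ω, hermiteQuadratic f f' (m - e) (m + e) (Y ω) ∂μ :=
        (integral_hermiteQuadratic hY f f' _ _).symm
    _ ≤ ∫ ω, f (Y ω) ∂μ := by
        refine integral_mono_ae (integrable_hermiteQuadratic hY f f' _ _) hfY ?_
        filter_upwards [hle] with ω hω using
          hermiteQuadratic_le_of_convexOn_deriv hf hff' hf' hlt hω

lemma sq_integral_sub_sq_le_exp_integral_log {e : ℝ} (he : 0 ≤ e) (hem : e < μ[Y])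
    (hY : MemLp Y 2 μ) (hlog : Integrable (fun ω ↦ log (Y ω)) μ)
    (hle : ∀ᵐ ω ∂μ, μ[Y] - e ≤ Y ω) (hvar : Var[Y; μ] ≤ e ^ 2) :
    μ[Y] ^ 2 - e ^ 2 ≤ exp (2 * ∫ ω, log (Y ω) ∂μ) := by
  set m := μ[Y]
  have hl : 0 < m - e := sub_pos.2 hem
  have hr : 0 < m + e := by linarith
  have hIci : Set.Ici (m - e) ⊆ Set.Ioi 0 := Set.Ici_subset_Ioi.2 hl
  have hIoi : Set.Ioi (m - e) ⊆ Set.Ioi 0 := Set.Ioi_subset_Ioi hl.le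
  have hinv : ConvexOn ℝ (Set.Ioi 0) fun x : ℝ ↦ x⁻¹ := by simpa using convexOn_zpow (𝕜 := ℝ) (-1)
  have hmean := two_point_mean_le_integral_of_convexOn_deriv he hY hlog
    (continuousOn_log.mono fun x hx ↦ (hIci hx).ne')
    (fun x hx ↦ hasDerivAt_log (hIoi hx).ne')
    (strictConcaveOn_log_Ioi.concaveOn.subset hIci (convex_Ici _))
    (hinv.subset hIoi (convex_Ioi _)) hle hvar
  calc m ^ 2 - e ^ 2 = exp (log (m - e) + log (m + e)) := by
        rw [exp_add, exp_log hl, exp_log hr]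
        ring
    _ ≤ exp (2 * ∫ ω, log (Y ω) ∂μ) := exp_le_exp.2 (by linarith)

lemma sq_integral_sub_max_le_exp_integral_log {s : ℝ} (hY : MemLp Y 2 μ)
    (hm0 : 0 ≤ μ[Y]) (hlog : Integrable (fun ω ↦ log (Y ω)) μ)
    (hs : ∀ᵐ ω ∂μ, s ≤ Y ω) :
    μ[Y] ^ 2 - max (Var[Y; μ]) ((μ[Y] - s) ^ 2) ≤ exp (2 * ∫ ω, log (Y ω) ∂μ) := by
  set M := max (Var[Y; μ]) ((μ[Y] - s) ^ 2)
  have hsqrt : √M ^ 2 = M := sq_sqrt ((variance_nonneg Y μ).trans (le_max_left _ _))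
  rcases le_or_gt (μ[Y]) (√M) with hm | hm
  · have hsq : μ[Y] ^ 2 ≤ M := hsqrt ▸ pow_le_pow_left₀ hm0 hm 2
    exact (sub_nonpos.2 hsq).trans (exp_pos _).le
  · have hsub : μ[Y] - s ≤ √M := le_sqrt_of_sq_le (le_max_right _ _)
    rw [← hsqrt]
    refine sq_integral_sub_sq_le_exp_integral_log (sqrt_nonneg M) hm hY hlog ?_
      ((le_max_left _ _).trans_eq hsqrt.symm)
    filter_upwards [hs] with ω hω
    linarith

end Probability

/-- Upper bound with `essInf X` replaced by any a.s. lower bound `a ≥ 0`: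
`E X - exp (E log X) ≤ max (2 Var √X) (E (√X - √a)²)`. -/
theorem arith_geom_upper_bound_of_le {Ω : Type*} [MeasurableSpace Ω] {μ : Measure Ω}
    [IsProbabilityMeasure μ] (X : Ω → ℝ) (hXm : Measurable X)
    (hXnn : ∀ᵐ ω ∂μ, 0 ≤ X ω) (hXint : Integrable X μ)
    (hlog : Integrable (fun ω => Real.log (X ω)) μ)
    (a : ℝ) (ha : 0 ≤ a) (haX : ∀ᵐ ω ∂μ, a ≤ X ω) :
    (∫ ω, X ω ∂μ) - Real.exp (∫ ω, Real.log (X ω) ∂μ) ≤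
      max (2 * variance (fun ω => Real.sqrt (X ω)) μ)
        (∫ ω, (Real.sqrt (X ω) - Real.sqrt a) ^ 2 ∂μ) := by
  have hsq : (fun ω ↦ √(X ω) ^ 2) =ᵐ[μ] X := hXnn.mono fun ω hω ↦ sq_sqrt hω
  have hY : MemLp (fun ω ↦ √(X ω)) 2 μ :=
    (memLp_two_iff_integrable_sq hXm.sqrt.aestronglyMeasurable).2 (hXint.congr hsq.symm)
  have hlogY : (fun ω ↦ log (√(X ω))) =ᵐ[μ] fun ω ↦ log (X ω) / 2 :=
    hXnn.mono fun ω hω ↦ log_sqrt hω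
  have hmean : ∫ ω, X ω ∂μ = Var[fun ω ↦ √(X ω); μ] + (∫ ω, √(X ω) ∂μ) ^ 2 := by
    simpa [integral_congr_ae hsq] using integral_sub_const_sq hY 0
  have hlogmean : 2 * ∫ ω, log (√(X ω)) ∂μ = ∫ ω, log (X ω) ∂μ := by
    rw [integral_congr_ae hlogY, integral_div]
    ring
  have hexp := sq_integral_sub_max_le_exp_integral_log hY (integral_nonneg fun ω ↦ sqrt_nonneg _)
    ((hlog.div_const 2).congr hlogY.symm) (haX.mono fun ω hω ↦ sqrt_le_sqrt hω)
  rw [hlogmean] at hexp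
  rw [hmean, integral_sub_const_sq hY, two_mul, max_add_add_left]
  linarith
end

section
/- For any real numbers V and E with E > V > 0, there exists a nonnegative random variable X (which may be taken to assume at most two values) with E[X] < ∞ such that Var(√X) = V and E[(√X − √m_X)²] = E, where m_X := essInf X. In fact one may take X = Y², where Y takes value u with probability p and value v with probability 1 − p, with p = V/E, u = 0, and v − u = E/√(E − V). -/
open MeasureTheory ProbabilityTheory Real

/-!
If `Y` takes the values `0 ≤ u < v` with probabilities `p, 1 - p > 0`, then `X = Y²` satisfies
`V_X = p (1 - p) (v - u)²` and `E_X = (1 - p) (v - u)²`. The quotient `V_X / E_X = p` dictates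
`p = V / E`, and `E_X = E` then forces `v - u = E / √(E - V)`.
-/

section Bernoulli

open scoped unitInterval

variable {Ω : Type*} [MeasurableSpace Ω] [MeasurableSingletonClass Ω]

lemma variance_bernoulliMeasure (x y : Ω) (p : I) (f : Ω → ℝ) :
    Var[f; Ber(x, y, p)] = p * (1 - p) * (f y - f x) ^ 2 := by
  rw [variance_eq_integral (integrable_bernoulliMeasure x y p f).aemeasurable]
  simp only [integral_bernoulliMeasure, smul_eq_mul]
  ring

lemma ae_bernoulliMeasure_iff (x y : Ω) {p : I} (hp₀ : 0 < p) (hp₁ : p < 1) {P : Ω → Prop} :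
    (∀ᵐ z ∂Ber(x, y, p), P z) ↔ P x ∧ P y := by
  have hp : unitInterval.toNNReal p ≠ 0 := NNReal.coe_ne_zero.1 (unitInterval.coe_pos.2 hp₀).ne'
  have hq : unitInterval.toNNReal (σ p) ≠ 0 :=
    NNReal.coe_ne_zero.1 (sub_pos.2 (unitInterval.coe_lt_one.2 hp₁)).ne'
  simp [bernoulliMeasure_def, ae_add_measure_iff, Measure.ae_smul_measure_iff hp,
    Measure.ae_smul_measure_iff hq, ae_dirac_eq]

lemma essInf_bernoulliMeasure {β : Type*} [ConditionallyCompleteLattice β] (x y : Ω) {p : I}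
    (hp₀ : 0 < p) (hp₁ : p < 1) (f : Ω → β) :
    essInf f Ber(x, y, p) = f x ⊓ f y := by
  simp only [essInf, Filter.liminf_eq, ae_bernoulliMeasure_iff x y hp₀ hp₁, ← le_inf_iff]
  exact csSup_Iic

lemma integral_comp_sub_comp_essInf_sq_bernoulliMeasure {β : Type*}
    [ConditionallyCompleteLattice β] {x y : Ω} {p : I} (hp₀ : 0 < p) (hp₁ : p < 1) {f : Ω → β}
    (hf : f x ≤ f y) (g : β → ℝ) :
    ∫ z, (g (f z) - g (essInf f Ber(x, y, p))) ^ 2 ∂Ber(x, y, p) =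
      (1 - p) * (g (f y) - g (f x)) ^ 2 := by
  simp [integral_bernoulliMeasure, essInf_bernoulliMeasure x y hp₀ hp₁, hf]

end Bernoulli

lemma one_sub_div_mul_div_sqrt_sub_sq {V E : ℝ} (hE : E ≠ 0) (hVE : V < E) :
    (1 - V / E) * (E / √(E - V)) ^ 2 = E := by
  have hd : E - V ≠ 0 := (sub_pos.2 hVE).ne'
  rw [div_pow, sq_sqrt (sub_pos.2 hVE).le]
  field_simp

/-- Sufficiency part of Proposition 1 for `(V, E)` with `E > V > 0`: there is a
nonnegative random variable `X` taking at most two values (namely `X = Y²` with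
`Y = Y_{u,v,p}`, `u = 0`, `v = E/√(E-V)`, `p = V/E`) such that `Var √X = V` and
`E (√X - √(essInf X))² = E`. -/
theorem exists_rv_with_V_E (V E : ℝ) (hV : 0 < V) (hVE : V < E) :
    ∃ (Ω : Type) (_ : MeasurableSpace Ω) (μ : Measure Ω) (_ : IsProbabilityMeasure μ)
      (X : Ω → ℝ), Measurable X ∧ (∀ ω, 0 ≤ X ω) ∧ Integrable X μ ∧
      (∀ ω, X ω = 0 ∨ X ω = (E / Real.sqrt (E - V)) ^ 2) ∧
      μ {ω | X ω = 0} = ENNReal.ofReal (V / E) ∧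
      variance (fun ω => Real.sqrt (X ω)) μ = V ∧
      (∫ ω, (Real.sqrt (X ω) - Real.sqrt (essInf X μ)) ^ 2 ∂μ) = E := by
  have hE : 0 < E := hV.trans hVE
  have hp₀ : 0 < V / E := div_pos hV hE
  have hp₁ : V / E < 1 := (div_lt_one hE).2 hVE
  let p : unitInterval := ⟨V / E, hp₀.le, hp₁.le⟩
  set v := E / √(E - V)
  have hv : 0 < v := div_pos hE (sqrt_pos.2 (sub_pos.2 hVE))
  have hEv : (1 - V / E) * v ^ 2 = E := one_sub_div_mul_div_sqrt_sub_sq hE.ne' hVE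
  let X : Bool → ℝ := fun b ↦ cond b (v ^ 2) 0
  refine ⟨Bool, inferInstance, Ber(false, true, p), inferInstance, X, .of_discrete,
    Bool.forall_bool.2 ⟨le_rfl, sq_nonneg v⟩, integrable_bernoulliMeasure _ _ _ _,
    Bool.forall_bool.2 ⟨.inl rfl, .inr rfl⟩, ?_, ?_, ?_⟩
  · rw [bernoulliMeasure_apply_of_mem_of_notMem p (s := {ω | X ω = 0}) .of_discrete rfl
      (pow_pos hv 2).ne']
    exact (ENNReal.ofReal_eq_coe_nnreal hp₀.le).symm
  · calc Var[fun b ↦ √(X b); Ber(false, true, p)]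
      _ = V / E * ((1 - V / E) * v ^ 2) := by
        simp [variance_bernoulliMeasure, X, p, sqrt_sq hv.le, mul_assoc]
      _ = V := by rw [hEv, div_mul_cancel₀ V hE.ne']
  · rw [integral_comp_sub_comp_essInf_sq_bernoulliMeasure hp₀ hp₁ (sq_nonneg v) sqrt]
    simpa [X, p, sqrt_sq hv.le] using hEv
end

section
/- Let X be a nonnegative random variable with E[X] < ∞ and M_X := essSup X < ∞. Set V_X := Var(√X) and F_X := E[(√M_X − √X)²]. Then either F_X = V_X = 0, or F_X > V_X > 0. (This is the necessity part of Proposition 1 for the pair (V_X, F_X).) -/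
open MeasureTheory ProbabilityTheory Real

/-! For `Y = √X ∈ L²` the bias–variance identity reads `E (c - Y)² = Var Y + (c - E Y)²`, and
`√M_X = essSup Y` because `√` is monotone and continuous. With `c = essSup Y` the excess
`F_X - V_X` is therefore `(essSup Y - E Y)²`, which vanishes exactly when `Y` is a.e. constant,
that is, when `V_X = 0`. -/

section

open Filter

variable {Ω : Type*} [MeasurableSpace Ω] {μ : Measure Ω} {X Y : Ω → ℝ}

lemma memLp_two_sqrt (hX : Integrable X μ) : MemLp (fun ω ↦ √(X ω)) 2 μ := by
  rw [memLp_two_iff_integrable_sq (continuous_sqrt.comp_aestronglyMeasurable hX.1)]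
  simpa only [sq_sqrt'] using hX.pos_part

lemma sqrt_essSup [NeZero μ] (hbdd : IsBoundedUnder (· ≤ ·) (ae μ) X)
    (hcobdd : IsCoboundedUnder (· ≤ ·) (ae μ) X) :
    √(essSup X μ) = essSup (fun ω ↦ √(X ω)) μ :=
  sqrt_monotone.map_limsup_of_continuousAt X continuous_sqrt.continuousAt hbdd hcobdd

variable [IsProbabilityMeasure μ]

lemma integral_const_sub_sq (hY : MemLp Y 2 μ) (c : ℝ) :
    ∫ ω, (c - Y ω) ^ 2 ∂μ = Var[Y; μ] + (c - μ[Y]) ^ 2 := by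
  have hmean : ∫ ω, (c - Y ω) ∂μ = c - μ[Y] := by
    rw [integral_sub (integrable_const c) (hY.integrable one_le_two), integral_const,
      probReal_univ, one_smul]
  have hvar := variance_eq_sub ((memLp_const c).sub hY)
  simp only [Pi.sub_def, Pi.pow_def] at hvar
  rw [variance_const_sub hY.1, hmean] at hvar
  linarith

lemma integral_eq_essSup_iff (hY : Integrable Y μ) (hbdd : IsBoundedUnder (· ≤ ·) (ae μ) Y) :
    μ[Y] = essSup Y μ ↔ Y =ᵐ[μ] fun _ ↦ essSup Y μ := by
  rw [← integral_eq_iff_of_ae_le hY (integrable_const _) (ae_le_essSup hbdd), integral_const,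
    probReal_univ, one_smul]

lemma variance_eq_zero_iff_integral_eq_essSup (hY : MemLp Y 2 μ)
    (hbdd : IsBoundedUnder (· ≤ ·) (ae μ) Y) :
    Var[Y; μ] = 0 ↔ μ[Y] = essSup Y μ := by
  constructor
  · intro hvar
    rw [essSup_congr_ae (ae_eq_integral_of_variance_eq_zero hY hvar), essSup_const']
  · intro hmean
    have hconst := (integral_eq_essSup_iff (hY.integrable one_le_two) hbdd).1 hmean
    rw [variance_congr hconst, ← covariance_self aemeasurable_const, covariance_const_left]

lemma integral_essSup_sub_sq_eq_zero (hY : MemLp Y 2 μ)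
    (hbdd : IsBoundedUnder (· ≤ ·) (ae μ) Y) (hvar : Var[Y; μ] = 0) :
    ∫ ω, (essSup Y μ - Y ω) ^ 2 ∂μ = 0 := by
  rw [integral_const_sub_sq hY, hvar, (variance_eq_zero_iff_integral_eq_essSup hY hbdd).1 hvar]
  ring

lemma variance_lt_integral_essSup_sub_sq (hY : MemLp Y 2 μ)
    (hbdd : IsBoundedUnder (· ≤ ·) (ae μ) Y) (hvar : Var[Y; μ] ≠ 0) :
    Var[Y; μ] < ∫ ω, (essSup Y μ - Y ω) ^ 2 ∂μ := by
  have hmean : essSup Y μ - μ[Y] ≠ 0 :=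
    sub_ne_zero.2 fun h ↦ hvar ((variance_eq_zero_iff_integral_eq_essSup hY hbdd).2 h.symm)
  rw [integral_const_sub_sq hY]
  exact lt_add_of_pos_right _ (sq_pos_of_ne_zero hmean)

end

/-- Necessity part of Proposition 1 for `(V_X, F_X)`: with `V_X = Var √X` and
`F_X = E (√M_X - √X)²`, `M_X = essSup X < ∞`, either `F_X = V_X = 0` or `F_X > V_X > 0`. -/
theorem admissible_V_F {Ω : Type*} [MeasurableSpace Ω] {μ : Measure Ω}
    [IsProbabilityMeasure μ] (X : Ω → ℝ) (hXm : Measurable X)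
    (hXnn : ∀ᵐ ω ∂μ, 0 ≤ X ω) (hXint : Integrable X μ)
    (hbdd : ∃ C : ℝ, ∀ᵐ ω ∂μ, X ω ≤ C)
    (V F : ℝ) (hVdef : V = variance (fun ω => Real.sqrt (X ω)) μ)
    (hFdef : F = ∫ ω, (Real.sqrt (essSup X μ) - Real.sqrt (X ω)) ^ 2 ∂μ) :
    (F = 0 ∧ V = 0) ∨ (F > V ∧ V > 0) := by
  have hY : MemLp (fun ω ↦ √(X ω)) 2 μ := memLp_two_sqrt hXint
  have hYbdd : (ae μ).IsBoundedUnder (· ≤ ·) fun ω ↦ √(X ω) :=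
    sqrt_monotone.isBoundedUnder_le_comp hbdd
  rw [sqrt_essSup hbdd (Filter.isCoboundedUnder_le_of_eventually_le _ hXnn)] at hFdef
  subst hVdef hFdef
  rcases (variance_nonneg (fun ω ↦ √(X ω)) μ).eq_or_lt' with hvar | hvar
  · exact .inl ⟨integral_essSup_sub_sq_eq_zero hY hYbdd hvar, hvar⟩
  · exact .inr ⟨variance_lt_integral_essSup_sub_sq hY hYbdd hvar.ne', hvar⟩
end

section
/- Let X be a nonnegative random variable with E[X] < ∞, M_X := essSup X < ∞, and V_X := Var(√X) > 0, and set m_X := essInf X, E_X := E[(√X − √m_X)²], F_X := E[(√M_X − √X)²]. Then E_X = F_X·V_X/(F_X − V_X) holds if and only if the support of the distribution of X is exactly {m_X, M_X}, i.e., if and only if the support of the distribution of X contains at most two points. -/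
open MeasureTheory ProbabilityTheory Real

/-- The topological support of a (distribution) measure on `ℝ`: the set of points all
of whose neighborhoods have positive measure. -/
def distSupport (ν : MeasureTheory.Measure ℝ) : Set ℝ :=
  {x | ∀ U ∈ nhds x, ν U ≠ 0}

/-!
Put `Y = √X`, `a = √m_X`, `b = √M_X`, `p = E[Y] - a`, `q = b - E[Y]` and `V = Var Y`. Then
`E_X = V + p²` and `F_X = V + q²`, so that, as `V > 0` and `p q ≥ 0`, the relation
`E_X = F_X V / (F_X - V)` factors as `(p q - V) (p q + V) = 0`, i.e. as `V = p q`. This is the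
equality case of the Bhatia–Davis inequality `V ≤ p q`, whose defect `p q - V` is the expectation
of the nonnegative variable `(b - Y) (Y - a)`; hence it says that `Y ∈ {a, b}` almost surely. The
essential bounds of `X` always lie in the support of its distribution, so this is the same as the
support being `{m_X, M_X}`.
-/

theorem add_sq_eq_mul_div_sub_iff {K : Type*} [Field K] [LinearOrder K] [IsStrictOrderedRing K]
    {v p q : K} (hv : 0 < v) (hpq : 0 ≤ q * p) :
    v + p ^ 2 = (v + q ^ 2) * v / (v + q ^ 2 - v) ↔ v = q * p := by
  rcases eq_or_ne q 0 with rfl | hq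
  -- For `q = 0` the quotient is `0` by convention, and both sides are false.
  · have hp : v + p ^ 2 ≠ 0 := by positivity
    simp [hp, hv.ne']
  · rw [add_sub_cancel_left, eq_div_iff (pow_ne_zero 2 hq)]
    have factor : (v + p ^ 2) * q ^ 2 - (v + q ^ 2) * v = (q * p - v) * (q * p + v) := by ring
    rw [← sub_eq_zero, factor, mul_eq_zero_iff_right (by positivity), sub_eq_zero, eq_comm]

section Moments

variable {Ω : Type*} [MeasurableSpace Ω] {μ : Measure Ω} [IsProbabilityMeasure μ]
  {X : Ω → ℝ}

theorem integral_sub_mul_sub_eq_sub_variance (hX : MemLp X 2 μ) (a b : ℝ) :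
    ∫ ω, (b - X ω) * (X ω - a) ∂μ = (b - μ[X]) * (μ[X] - a) - Var[X; μ] := by
  have hX₁ : Integrable X μ := hX.integrable one_le_two
  have hcov : cov[fun ω ↦ b - X ω, fun ω ↦ X ω - a; μ] = -Var[X; μ] := by
    rw [covariance_const_sub_left hX₁, covariance_sub_const_right hX₁,
      covariance_self hX.aemeasurable]
  have hsub : cov[fun ω ↦ b - X ω, fun ω ↦ X ω - a; μ] =
      ∫ ω, (b - X ω) * (X ω - a) ∂μ - (∫ ω, b - X ω ∂μ) * ∫ ω, X ω - a ∂μ :=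
    covariance_eq_sub ((memLp_const b).sub hX) (hX.sub (memLp_const a))
  have hb : ∫ ω, b - X ω ∂μ = b - μ[X] := by simp [integral_sub (integrable_const b) hX₁]
  have ha : ∫ ω, X ω - a ∂μ = μ[X] - a := by simp [integral_sub hX₁ (integrable_const a)]
  rw [hb, ha] at hsub
  linarith

theorem integral_sub_const_sq_eq_variance_add (hX : MemLp X 2 μ) (c : ℝ) :
    ∫ ω, (X ω - c) ^ 2 ∂μ = Var[X; μ] + (μ[X] - c) ^ 2 := by
  calc ∫ ω, (X ω - c) ^ 2 ∂μ
    _ = -∫ ω, (c - X ω) * (X ω - c) ∂μ := by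
      rw [← integral_neg]
      congr 1 with ω
      ring
    _ = Var[X; μ] + (μ[X] - c) ^ 2 := by
      rw [integral_sub_mul_sub_eq_sub_variance hX]
      ring

variable {a b : ℝ}

theorem variance_eq_sub_mul_sub_iff (h : ∀ᵐ ω ∂μ, X ω ∈ Set.Icc a b) (hX : AEMeasurable X μ) :
    Var[X; μ] = (b - μ[X]) * (μ[X] - a) ↔ ∀ᵐ ω ∂μ, X ω ∈ ({a, b} : Set ℝ) := by
  have hL2 : MemLp X 2 μ := memLp_of_bounded h hX.aestronglyMeasurable 2
  have hnonneg : 0 ≤ᵐ[μ] fun ω ↦ (b - X ω) * (X ω - a) :=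
    h.mono fun ω hω ↦ mul_nonneg (sub_nonneg.2 hω.2) (sub_nonneg.2 hω.1)
  have hint : Integrable (fun ω ↦ (b - X ω) * (X ω - a)) μ :=
    ((memLp_const b).sub hL2).integrable_mul (hL2.sub (memLp_const a))
  rw [eq_comm, ← sub_eq_zero, ← integral_sub_mul_sub_eq_sub_variance hL2,
    integral_eq_zero_iff_of_nonneg_ae hnonneg hint]
  refine Filter.eventually_congr (.of_forall fun ω ↦ ?_)
  simp only [Pi.zero_apply, mul_eq_zero, sub_eq_zero, Set.mem_insert_iff, Set.mem_singleton_iff,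
    eq_comm (a := b), or_comm]

theorem integral_sub_sq_eq_mul_div_sub_iff (h : ∀ᵐ ω ∂μ, X ω ∈ Set.Icc a b)
    (hX : AEMeasurable X μ) (hV : 0 < Var[X; μ]) :
    ∫ ω, (X ω - a) ^ 2 ∂μ =
        (∫ ω, (b - X ω) ^ 2 ∂μ) * Var[X; μ] / (∫ ω, (b - X ω) ^ 2 ∂μ - Var[X; μ]) ↔
      ∀ᵐ ω ∂μ, X ω ∈ ({a, b} : Set ℝ) := by
  have hL2 : MemLp X 2 μ := memLp_of_bounded h hX.aestronglyMeasurable 2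
  have hbd : Var[X; μ] ≤ (b - μ[X]) * (μ[X] - a) := variance_le_sub_mul_sub h hX
  simp_rw [sub_sq_comm b, integral_sub_const_sq_eq_variance_add hL2, sub_sq_comm _ b]
  rw [add_sq_eq_mul_div_sub_iff hV (hV.le.trans hbd), variance_eq_sub_mul_sub_iff h hX]

end Moments

section Support

theorem distSupport_eq_support (ν : Measure ℝ) : distSupport ν = ν.support := by
  ext x
  simp only [distSupport, Set.mem_ofPred_eq, Measure.mem_support_iff_forall, pos_iff_ne_zero]

theorem mem_support_iff_clusterPt_ae {S : Type*} [TopologicalSpace S] [MeasurableSpace S]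
    {ν : Measure S} {x : S} : x ∈ ν.support ↔ ClusterPt x (ae ν) := by
  simp only [Measure.mem_support_iff_forall, clusterPt_iff_frequently, frequently_ae_iff,
    pos_iff_ne_zero, Set.ofPred_mem_eq]

theorem support_eq_iff_ae_mem {S : Type*} [TopologicalSpace S] [HereditarilyLindelofSpace S]
    [MeasurableSpace S] {ν : Measure S} {s : Set S} (hs : IsClosed s) (hsν : s ⊆ ν.support) :
    ν.support = s ↔ ∀ᵐ x ∂ν, x ∈ s :=
  ⟨fun h ↦ h ▸ Measure.support_mem_ae,
    fun h ↦ (Measure.support_subset_of_isClosed hs h).antisymm hsν⟩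

variable {α β : Type*} [MeasurableSpace α] {μ : Measure α} [NeZero μ]
  [ConditionallyCompleteLinearOrder β] [TopologicalSpace β] [OrderTopology β] [MeasurableSpace β]
  {f : α → β}

theorem essSup_mem_support_map (hf : AEMeasurable f μ)
    (hle : Filter.IsBoundedUnder (· ≤ ·) (ae μ) f)
    (hge : Filter.IsBoundedUnder (· ≥ ·) (ae μ) f) : essSup f μ ∈ (μ.map f).support :=
  mem_support_iff_clusterPt_ae.2 <|
    (MapClusterPt.limsup hge.isCoboundedUnder_le hle).clusterPt.mono (Measure.tendsto_ae_map hf)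

theorem essInf_mem_support_map (hf : AEMeasurable f μ)
    (hle : Filter.IsBoundedUnder (· ≤ ·) (ae μ) f)
    (hge : Filter.IsBoundedUnder (· ≥ ·) (ae μ) f) : essInf f μ ∈ (μ.map f).support :=
  mem_support_iff_clusterPt_ae.2 <|
    (MapClusterPt.liminf hle.isCoboundedUnder_ge hge).clusterPt.mono (Measure.tendsto_ae_map hf)

theorem support_map_eq_essInf_essSup_iff [HereditarilyLindelofSpace β] [OpensMeasurableSpace β]
    (hf : AEMeasurable f μ)
    (hle : Filter.IsBoundedUnder (· ≤ ·) (ae μ) f)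
    (hge : Filter.IsBoundedUnder (· ≥ ·) (ae μ) f) :
    (μ.map f).support = {essInf f μ, essSup f μ} ↔
      ∀ᵐ x ∂μ, f x ∈ ({essInf f μ, essSup f μ} : Set β) := by
  have hclosed : IsClosed ({essInf f μ, essSup f μ} : Set β) := (Set.toFinite _).isClosed
  rw [support_eq_iff_ae_mem hclosed
    (Set.pair_subset (essInf_mem_support_map hf hle hge) (essSup_mem_support_map hf hle hge))]
  exact ae_map_iff hf hclosed.measurableSet

end Support

/-- Proposition 2, equality case: with `M_X = essSup X < ∞` and `V_X = Var √X > 0`,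
`E_X = F_X V_X / (F_X - V_X)` holds if and only if the support of the distribution of
`X` is exactly `{essInf X, essSup X}` (i.e. has at most two points). -/
theorem E_eq_FV_div_F_sub_V_iff {Ω : Type*} [MeasurableSpace Ω] {μ : Measure Ω}
    [IsProbabilityMeasure μ] (X : Ω → ℝ) (hXm : Measurable X)
    (hXnn : ∀ᵐ ω ∂μ, 0 ≤ X ω) (hXint : Integrable X μ)
    (hbdd : ∃ C : ℝ, ∀ᵐ ω ∂μ, X ω ≤ C)
    (V E F : ℝ) (hVdef : V = variance (fun ω => Real.sqrt (X ω)) μ)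
    (hEdef : E = ∫ ω, (Real.sqrt (X ω) - Real.sqrt (essInf X μ)) ^ 2 ∂μ)
    (hFdef : F = ∫ ω, (Real.sqrt (essSup X μ) - Real.sqrt (X ω)) ^ 2 ∂μ)
    (hV : 0 < V) :
    E = F * V / (F - V) ↔ distSupport (μ.map X) = {essInf X μ, essSup X μ} := by
  obtain ⟨C, hC⟩ := hbdd
  subst hVdef hEdef hFdef
  have hle : Filter.IsBoundedUnder (· ≤ ·) (ae μ) X := ⟨C, hC⟩
  have hge : Filter.IsBoundedUnder (· ≥ ·) (ae μ) X := ⟨0, hXnn⟩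
  have hX : ∀ᵐ ω ∂μ, X ω ∈ Set.Icc (essInf X μ) (essSup X μ) :=
    (ae_essInf_le hge).and (ae_le_essSup hle)
  have hm : 0 ≤ essInf X μ := Filter.le_liminf_of_le hle.isCoboundedUnder_ge hXnn
  have hsqrt : ∀ᵐ ω ∂μ, √(X ω) ∈ Set.Icc √(essInf X μ) √(essSup X μ) :=
    hX.mono fun ω hω ↦ ⟨Real.sqrt_le_sqrt hω.1, Real.sqrt_le_sqrt hω.2⟩
  rw [integral_sub_sq_eq_mul_div_sub_iff hsqrt hXm.sqrt.aemeasurable hV, distSupport_eq_support,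
    support_map_eq_essInf_essSup_iff hXm.aemeasurable hle hge]
  refine Filter.eventually_congr (hX.mono fun ω ⟨hmX, hXM⟩ ↦ ?_)
  have hX₀ : 0 ≤ X ω := hm.trans hmX
  simp only [Set.mem_insert_iff, Set.mem_singleton_iff, Real.sqrt_inj hX₀ hm,
    Real.sqrt_inj hX₀ (hX₀.trans hXM)]
end

section
/- For any real numbers V and E with E > V > 0: sup{ E[X] − exp(E[log X]) : X nonnegative random variable taking at most two values, Var(√X) = V, E[(√X − √m_X)²] = E } = max(2V, E), where m_X := essInf X. In particular, for every δ > 0 there exists a random variable X taking at most two positive values with Var(√X) = V, E[(√X − √m_X)²] = E, and E[X] − exp(E[log X]) > max(2V, E) − δ. -/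
open MeasureTheory ProbabilityTheory Real

/-!
Suppose `X` takes the value `a ^ 2` with probability `p > 0` and `(a + h) ^ 2` with probability
`1 - p`, where `a ≥ 0` and `h > 0`. Then `V_X = p (1 - p) h ^ 2` and `E_X = (1 - p) h ^ 2` determine
`p` and `h` and leave `a` free, while for `a > 0`, writing `r = 2 (1 - p)` and `t = h / a`,
`D_X = E_X - a ^ 2 ((1 + t) ^ r - (1 + r t))`.
If `r ≥ 1`, Bernoulli's inequality gives `D_X ≤ E_X`; if `r ≤ 1`, the second order Taylor
polynomial of `(1 + t) ^ r` is a lower bound for it and gives `D_X ≤ 2 V_X`. Conversely `D_X` tends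
to `E_X` as `a → 0` and to `2 V_X` as `a → ∞`.
-/

theorem csSup_eq_of_forall_le_of_forall_lt_exists_lt {α : Type*}
    [ConditionallyCompleteLinearOrder α] [NoMinOrder α] {s : Set α} {b : α}
    (h_le : ∀ d ∈ s, d ≤ b) (h_lt : ∀ c < b, ∃ d ∈ s, c < d) : sSup s = b := by
  obtain ⟨c, hc⟩ := exists_lt b
  obtain ⟨d, hd, -⟩ := h_lt c hc
  exact csSup_eq_of_forall_le_of_forall_lt_exists_gt ⟨d, hd⟩ h_le h_lt

section Rpow

open Filter Topology Asymptotics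

theorem one_add_mul_self_le_rpow_one_add_of_nonpos {t r : ℝ} (ht : -1 < t) (hr : r ≤ 0) :
    1 + r * t ≤ (1 + t) ^ r := by
  have ht' : 0 < 1 + t := by linarith
  rw [Real.rpow_def_of_pos ht']
  have h_log : log (1 + t) ≤ t := by linarith [log_le_sub_one_of_pos ht']
  calc 1 + r * t ≤ log (1 + t) * r + 1 := by nlinarith
    _ ≤ exp (log (1 + t) * r) := add_one_le_exp _

theorem one_add_mul_add_mul_sq_le_rpow_one_add {t r : ℝ} (ht : 0 ≤ t) (hr0 : 0 ≤ r)
    (hr1 : r ≤ 1) : 1 + r * t + r * (r - 1) / 2 * t ^ 2 ≤ (1 + t) ^ r := by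
  let g : ℝ → ℝ := fun s ↦ (1 + s) ^ r - (1 + r * s + r * (r - 1) / 2 * s ^ 2)
  have hg (s : ℝ) (hs : 0 ≤ s) :
      HasDerivAt g (r * ((1 + s) ^ (r - 1) - (1 + (r - 1) * s))) s := by
    have h_rpow := ((hasDerivAt_id s).const_add 1).rpow_const (p := r)
      (Or.inl (by simp only [id]; linarith))
    have h_poly := (((hasDerivAt_id s).const_mul r).const_add 1).add
      ((hasDerivAt_pow 2 s).const_mul (r * (r - 1) / 2))
    refine (h_rpow.sub h_poly).congr_deriv ?_
    simp only [id]
    push_cast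
    ring
  have hg_mono : MonotoneOn g (Set.Ici 0) := by
    refine monotoneOn_of_hasDerivWithinAt_nonneg (convex_Ici 0)
      (fun s hs ↦ (hg s hs).continuousAt.continuousWithinAt)
      (fun s hs ↦ (hg s (interior_subset hs)).hasDerivWithinAt) fun s hs ↦ ?_
    have hs0 : 0 ≤ s := interior_subset hs
    exact mul_nonneg hr0 (sub_nonneg.2
      (one_add_mul_self_le_rpow_one_add_of_nonpos (by linarith) (by linarith)))
  have := hg_mono Set.self_mem_Ici ht ht
  simpa [g] using this

theorem tendsto_rpow_one_add_sub_div_sq (r : ℝ) :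
    Tendsto (fun t : ℝ ↦ ((1 + t) ^ r - (1 + r * t)) / t ^ 2) (𝓝[≠] 0)
      (𝓝 (r * (r - 1) / 2)) := by
  have h_choose : Ring.choose r 2 = r * (r - 1) / 2 := by
    simp only [Ring.choose_eq_smul, Nat.factorial_two, Nat.cast_ofNat, descPochhammer_succ_left,
      descPochhammer_zero, Polynomial.one_comp, mul_one, Polynomial.X_comp, Polynomial.smeval_mul,
      Polynomial.smeval_X, pow_one, Polynomial.smeval_sub, Polynomial.smeval_one, pow_zero,
      one_smul, smul_eq_mul]
    ring
  have h_sum (t : ℝ) :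
      (binomialSeries ℝ r).partialSum 3 t = 1 + r * t + r * (r - 1) / 2 * t ^ 2 := by
    simp only [FormalMultilinearSeries.partialSum, binomialSeries,
      FormalMultilinearSeries.apply_eq_prod_smul_coeff, Finset.prod_const, Finset.card_univ,
      Fintype.card_fin, FormalMultilinearSeries.coeff_ofScalars, smul_eq_mul,
      Finset.sum_range_succ, Finset.range_one, Finset.sum_singleton, pow_zero,
      Ring.choose_zero_right', mul_one, pow_one, Ring.choose_one_right', h_choose]
    ring
  have h_taylor : (fun t : ℝ ↦ (1 + t) ^ r - (1 + r * t + r * (r - 1) / 2 * t ^ 2))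
      =o[𝓝 0] fun t ↦ t ^ 2 := by
    have h_bigO := (one_add_rpow_hasFPowerSeriesAt_zero (a := r)).isBigO_sub_partialSum_pow 3
    simp only [h_sum, zero_add, ← norm_pow] at h_bigO
    exact h_bigO.of_norm_right.trans_isLittleO (isLittleO_pow_pow (by norm_num : 2 < 3))
  have h_lim := ((h_taylor.mono (nhdsWithin_le_nhds (s := {0}ᶜ))).tendsto_div_nhds_zero).add_const
    (r * (r - 1) / 2)
  rw [zero_add] at h_lim
  refine h_lim.congr' ?_
  filter_upwards [self_mem_nhdsWithin] with t (ht : t ≠ 0)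
  field_simp
  ring

theorem rpow_mul_rpow_le_exp {x y p q : ℝ} (hy : 0 ≤ y) :
    x ^ p * y ^ q ≤ exp (p * log x + q * log y) := by
  have h (z s : ℝ) : z ^ s ≤ exp (s * log z) := by
    simpa only [mul_comm] using (le_abs_self _).trans (abs_rpow_le_exp_log_mul z s)
  rw [exp_add]
  exact mul_le_mul (h x p) (h y q) (rpow_nonneg hy q) (exp_nonneg _)

theorem rpow_mul_rpow_eq_exp {x y : ℝ} (hx : 0 < x) (hy : 0 < y) (p q : ℝ) :
    x ^ p * y ^ q = exp (p * log x + q * log y) := by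
  rw [rpow_def_of_pos hx, rpow_def_of_pos hy, ← exp_add, mul_comm p, mul_comm q]

end Rpow

section AmGmGap

open Filter Topology

/-- The weighted arithmetic mean of `x` and `y` minus their weighted geometric mean, the weights
being `p` at `x` and `1 - p` at `y`: for `x, y > 0` this is `D_X` for `X` with law `Ber(x, y, p)`.
The geometric mean is written with powers because it then vanishes when a point of positive weight
is `0`, where `Real.log` takes the value `0` instead of `-∞`. -/
noncomputable def amGmGap (p x y : ℝ) : ℝ :=
  p * x + (1 - p) * y - x ^ p * y ^ (1 - p)

variable {p a h : ℝ}

theorem amGmGap_sq_add_sq (ha : 0 < a) (hh : 0 ≤ h) :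
    amGmGap p (a ^ 2) ((a + h) ^ 2) = (1 - p) * h ^ 2 -
      a ^ 2 * ((1 + h / a) ^ (2 * (1 - p)) - (1 + 2 * (1 - p) * (h / a))) := by
  have h_geom : (a ^ 2) ^ p * ((a + h) ^ 2) ^ (1 - p) = a ^ 2 * (1 + h / a) ^ (2 * (1 - p)) := by
    have h_add : a + h = a * (1 + h / a) := by field_simp
    have h_pow : ((1 + h / a) ^ 2) ^ (1 - p) = (1 + h / a) ^ (2 * (1 - p)) := by
      rw [← rpow_natCast_mul (by positivity), Nat.cast_ofNat]
    rw [h_add, mul_pow, mul_rpow (by positivity) (by positivity), h_pow, ← mul_assoc,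
      ← rpow_add (by positivity), add_sub_cancel, rpow_one]
  rw [amGmGap, h_geom]
  field_simp
  ring

theorem amGmGap_sq_add_sq_le (hp1 : p ≤ 1) (ha : 0 ≤ a) (hh : 0 ≤ h) :
    amGmGap p (a ^ 2) ((a + h) ^ 2) ≤ max (2 * (p * (1 - p) * h ^ 2)) ((1 - p) * h ^ 2) := by
  rcases ha.eq_or_lt with rfl | ha
  · have : 0 ≤ ((0 : ℝ) ^ 2) ^ p * ((0 + h) ^ 2) ^ (1 - p) := by positivity
    refine le_max_of_le_right ?_
    rw [amGmGap]
    linarith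
  rw [amGmGap_sq_add_sq ha hh]
  rcases le_total p (1 / 2) with hp | hp
  · have h_bernoulli : 1 + 2 * (1 - p) * (h / a) ≤ (1 + h / a) ^ (2 * (1 - p)) :=
      one_add_mul_self_le_rpow_one_add (by linarith [div_nonneg hh ha.le]) (by linarith)
    exact le_max_of_le_right (sub_le_self _ (mul_nonneg (sq_nonneg a) (sub_nonneg.2 h_bernoulli)))
  · have h_taylor := one_add_mul_add_mul_sq_le_rpow_one_add (t := h / a) (r := 2 * (1 - p))
      (by positivity) (by linarith) (by linarith)
    refine le_max_of_le_left ?_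
    calc (1 - p) * h ^ 2 -
          a ^ 2 * ((1 + h / a) ^ (2 * (1 - p)) - (1 + 2 * (1 - p) * (h / a)))
        ≤ (1 - p) * h ^ 2 -
          a ^ 2 * (2 * (1 - p) * (2 * (1 - p) - 1) / 2 * (h / a) ^ 2) := by
          gcongr
          linarith
      _ = 2 * (p * (1 - p) * h ^ 2) := by
          field_simp
          ring

theorem tendsto_amGmGap_nhds_zero (hp0 : 0 < p) (hp1 : p ≤ 1) (h : ℝ) :
    Tendsto (fun a ↦ amGmGap p (a ^ 2) ((a + h) ^ 2)) (𝓝 0) (𝓝 ((1 - p) * h ^ 2)) := by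
  have h_cont : Continuous fun a ↦ amGmGap p (a ^ 2) ((a + h) ^ 2) := by
    have h_left : Continuous fun a : ℝ ↦ (a ^ 2) ^ p :=
      (continuous_pow 2).rpow_const fun _ ↦ Or.inr hp0.le
    have h_right : Continuous fun a : ℝ ↦ ((a + h) ^ 2) ^ (1 - p) :=
      ((continuous_add_const h).pow 2).rpow_const fun _ ↦ Or.inr (sub_nonneg.2 hp1)
    unfold amGmGap
    fun_prop
  simpa [amGmGap, zero_rpow hp0.ne'] using h_cont.tendsto 0

theorem tendsto_amGmGap_atTop (p : ℝ) (hh : 0 < h) :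
    Tendsto (fun a ↦ amGmGap p (a ^ 2) ((a + h) ^ 2)) atTop (𝓝 (2 * (p * (1 - p) * h ^ 2))) := by
  have h_div : Tendsto (fun a ↦ h / a) atTop (𝓝[≠] 0) :=
    tendsto_nhdsWithin_iff.2 ⟨tendsto_const_nhds.div_atTop tendsto_id, by
      filter_upwards [eventually_gt_atTop 0] with a ha using (div_pos hh ha).ne'⟩
  have h_lim := (((tendsto_rpow_one_add_sub_div_sq (2 * (1 - p))).comp h_div).const_sub
    (1 - p)).const_mul (h ^ 2)
  convert h_lim.congr' ?_ using 2
  · ring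
  · filter_upwards [eventually_gt_atTop 0] with a ha
    rw [amGmGap_sq_add_sq ha hh.le, Function.comp_apply]
    field_simp

theorem exists_pos_lt_amGmGap (hp0 : 0 < p) (hp1 : p ≤ 1) (hh : 0 < h) {c : ℝ}
    (hc : c < max (2 * (p * (1 - p) * h ^ 2)) ((1 - p) * h ^ 2)) :
    ∃ a > 0, c < amGmGap p (a ^ 2) ((a + h) ^ 2) := by
  rcases lt_max_iff.1 hc with hc | hc
  · exact ((eventually_gt_atTop 0).and
      ((tendsto_amGmGap_atTop p hh).eventually_const_lt hc)).exists
  · have h_ev := (tendsto_amGmGap_nhds_zero hp0 hp1 h).eventually_const_lt hc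
    obtain ⟨a, ha, ha0⟩ := ((h_ev.filter_mono nhdsWithin_le_nhds).and
      (self_mem_nhdsWithin (s := Set.Ioi (0 : ℝ)))).exists
    exact ⟨a, ha0, ha⟩

end AmGmGap

section BernoulliLaw

open unitInterval Filter

variable {Ω α β F γ : Type*} [MeasurableSpace Ω] {μ : Measure Ω}
  [MeasurableSpace α] [MeasurableSingletonClass α] {X : Ω → α} {x y : α} {p : I}

theorem exists_eq_bernoulliMeasure {ν : Measure α} [IsProbabilityMeasure ν]
    (h : ∀ᵐ z ∂ν, z = x ∨ z = y) : ∃ p : I, ν = Ber(x, y, p) := by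
  have hν : ν.restrict {x, y} = ν := Measure.restrict_eq_self_of_ae_mem h
  rcases eq_or_ne x y with rfl | hxy
  · rw [Set.pair_eq_singleton, Measure.restrict_singleton] at hν
    have hx : ν {x} = 1 := by simpa using congr($hν Set.univ)
    exact ⟨1, by rw [bernoulliMeasure_one, ← hν, hx, one_smul]⟩
  · rw [Set.insert_eq, Measure.restrict_union (by simpa using hxy) (measurableSet_singleton y),
      Measure.restrict_singleton, Measure.restrict_singleton] at hν
    obtain ⟨a, ha⟩ : ∃ a : NNReal, a = ν {x} := ⟨_, ENNReal.coe_toNNReal (measure_ne_top ν _)⟩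
    obtain ⟨b, hb⟩ : ∃ b : NNReal, b = ν {y} := ⟨_, ENNReal.coe_toNNReal (measure_ne_top ν _)⟩
    rw [← ha, ← hb] at hν
    have hab : (a + b : ℝ) = 1 := by
      have : (a + b : ENNReal) = 1 := by simpa using congr($hν Set.univ)
      exact_mod_cast this
    refine ⟨⟨a, a.2, by linarith [b.2]⟩, ?_⟩
    have hb' : b = unitInterval.toNNReal (σ ⟨a, a.2, by linarith [b.2]⟩) :=
      NNReal.eq (by simp only [unitInterval.coe_toNNReal, coe_symm_eq]; linarith)
    rw [bernoulliMeasure_def, ← hb', ← hν]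
    rfl

theorem exists_hasLaw_bernoulliMeasure [IsProbabilityMeasure μ] (hX : AEMeasurable X μ)
    (h : ∀ᵐ ω ∂μ, X ω = x ∨ X ω = y) : ∃ p : I, HasLaw X Ber(x, y, p) μ := by
  have := Measure.isProbabilityMeasure_map hX
  have hs : MeasurableSet {z | z = x ∨ z = y} :=
    (measurableSet_singleton x).union (measurableSet_singleton y)
  obtain ⟨p, hp⟩ := exists_eq_bernoulliMeasure ((ae_map_iff hX hs).2 h)
  exact ⟨p, hX, hp⟩

theorem exists_le_hasLaw_bernoulliMeasure [LinearOrder α] [IsProbabilityMeasure μ]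
    (hX : AEMeasurable X μ) (h : ∀ᵐ ω ∂μ, X ω = x ∨ X ω = y) :
    ∃ a b : α, ∃ p : I, a ≤ b ∧ 0 < p ∧ HasLaw X Ber(a, b, p) μ := by
  wlog hxy : x ≤ y generalizing x y
  · exact this (h.mono fun _ ↦ Or.symm) (le_of_not_ge hxy)
  obtain ⟨p, hp⟩ := exists_hasLaw_bernoulliMeasure hX h
  rcases eq_or_ne p 0 with rfl | hp0
  · exact ⟨y, y, 1, le_rfl, zero_lt_one, by simpa using hp⟩
  · exact ⟨x, y, p, hxy, unitInterval.pos_iff_ne_zero.2 hp0, hp⟩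

theorem hasLaw_comp_bernoulliMeasure [MeasurableSpace β] [MeasurableSingletonClass β]
    (hX : HasLaw X Ber(x, y, p) μ) (f : α → β) :
    HasLaw (fun ω ↦ f (X ω)) Ber(f x, f y, p) μ := by
  have hf : AEMeasurable f Ber(x, y, p) :=
    (aemeasurable_dirac.smul_measure _).add_measure (aemeasurable_dirac.smul_measure _)
  exact HasLaw.fun_comp ⟨hf, map_bernoulliMeasure x y f p⟩ hX

theorem integral_comp_of_hasLaw_bernoulliMeasure [NormedAddCommGroup F]
    [NormedSpace ℝ F] [CompleteSpace F] (hX : HasLaw X Ber(x, y, p) μ) (f : α → F) :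
    ∫ ω, f (X ω) ∂μ = (p : ℝ) • f x + (1 - p : ℝ) • f y := by
  rw [← integral_bernoulliMeasure]
  exact hX.integral_comp (integrable_bernoulliMeasure x y p f).aestronglyMeasurable

theorem variance_of_hasLaw_bernoulliMeasure {X : Ω → ℝ} {x y : ℝ}
    (hX : HasLaw X Ber(x, y, p) μ) : Var[X; μ] = p * (1 - p) * (y - x) ^ 2 := by
  rw [variance_eq_integral hX.aemeasurable,
    integral_comp_of_hasLaw_bernoulliMeasure hX (fun z ↦ (z - ∫ ω, X ω ∂μ) ^ 2),
    integral_comp_of_hasLaw_bernoulliMeasure hX (fun z ↦ z)]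
  simp only [smul_eq_mul]
  ring

theorem ae_eq_or_eq_of_hasLaw_bernoulliMeasure (hX : HasLaw X Ber(x, y, p) μ) :
    ∀ᵐ ω ∂μ, X ω = x ∨ X ω = y := by
  refine ae_of_ae_map (p := fun z ↦ z = x ∨ z = y) hX.aemeasurable ?_
  rw [hX.map_eq, bernoulliMeasure_def, ae_add_measure_iff]
  exact ⟨Measure.ae_smul_measure (by simp) _, Measure.ae_smul_measure (by simp) _⟩

theorem frequently_eq_of_hasLaw_bernoulliMeasure (hX : HasLaw X Ber(x, y, p) μ) (hp : 0 < p) :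
    ∃ᶠ ω in ae μ, X ω = x := by
  have hp' : unitInterval.toNNReal p ≠ 0 := fun h ↦ hp.ne' (Subtype.ext congr(($h : ℝ)))
  have h_meas : Measurable fun z ↦ ¬z = x :=
    measurableSet_setOfPred.1 (measurableSet_singleton x).compl
  rw [Filter.Frequently, hX.ae_iff h_meas, bernoulliMeasure_def, ae_add_measure_iff]
  simp [hp', ae_dirac_eq]

theorem essInf_eq_of_ae_le_of_frequently_eq [ConditionallyCompleteLinearOrder γ]
    {X : Ω → γ} {x : γ} (h_le : ∀ᵐ ω ∂μ, x ≤ X ω) (h_eq : ∃ᶠ ω in ae μ, X ω = x) :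
    essInf X μ = x :=
  le_antisymm (liminf_le_of_frequently_le (h_eq.mono fun _ h ↦ h.le) ⟨x, h_le⟩)
    (le_liminf_of_le (IsCobounded.of_frequently_le (h_eq.mono fun _ h ↦ h.le)) h_le)

theorem essInf_of_hasLaw_bernoulliMeasure [ConditionallyCompleteLinearOrder α] (hxy : x ≤ y)
    (hp : 0 < p) (hX : HasLaw X Ber(x, y, p) μ) : essInf X μ = x := by
  refine essInf_eq_of_ae_le_of_frequently_eq ?_ (frequently_eq_of_hasLaw_bernoulliMeasure hX hp)
  filter_upwards [ae_eq_or_eq_of_hasLaw_bernoulliMeasure hX] with ω hω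
  rcases hω with hω | hω
  · exact hω.ge
  · exact hω ▸ hxy

end BernoulliLaw

section TwoValued

open unitInterval

variable {Ω : Type*} [MeasurableSpace Ω] {μ : Measure Ω} {X : Ω → ℝ} {x y : ℝ} {p : I}

theorem integral_sub_exp_integral_log_le_amGmGap (hX : HasLaw X Ber(x, y, p) μ) (hy : 0 ≤ y) :
    (∫ ω, X ω ∂μ) - exp (∫ ω, log (X ω) ∂μ) ≤ amGmGap p x y := by
  rw [integral_comp_of_hasLaw_bernoulliMeasure hX (fun z ↦ z),
    integral_comp_of_hasLaw_bernoulliMeasure hX log]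
  exact sub_le_sub_left (rpow_mul_rpow_le_exp hy) _

theorem integral_sub_exp_integral_log_eq_amGmGap (hX : HasLaw X Ber(x, y, p) μ) (hx : 0 < x)
    (hy : 0 < y) : (∫ ω, X ω ∂μ) - exp (∫ ω, log (X ω) ∂μ) = amGmGap p x y := by
  rw [integral_comp_of_hasLaw_bernoulliMeasure hX (fun z ↦ z),
    integral_comp_of_hasLaw_bernoulliMeasure hX log, amGmGap, rpow_mul_rpow_eq_exp hx hy]
  simp only [smul_eq_mul]

theorem variance_sqrt_of_hasLaw_bernoulliMeasure (hX : HasLaw X Ber(x, y, p) μ) :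
    Var[fun ω ↦ √(X ω); μ] = p * (1 - p) * (√y - √x) ^ 2 :=
  variance_of_hasLaw_bernoulliMeasure (hasLaw_comp_bernoulliMeasure hX sqrt)

theorem integral_sqrt_sub_sqrt_essInf_sq_of_hasLaw_bernoulliMeasure (hxy : x ≤ y) (hp : 0 < p)
    (hX : HasLaw X Ber(x, y, p) μ) :
    ∫ ω, (√(X ω) - √(essInf X μ)) ^ 2 ∂μ = (1 - p) * (√y - √x) ^ 2 := by
  rw [essInf_of_hasLaw_bernoulliMeasure hxy hp hX,
    integral_comp_of_hasLaw_bernoulliMeasure hX (fun z ↦ (√z - √x) ^ 2)]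
  simp

theorem integral_sub_exp_integral_log_le_max [IsProbabilityMeasure μ] (hX : AEMeasurable X μ)
    (h_nonneg : ∀ᵐ ω ∂μ, 0 ≤ X ω) (h_two : ∀ᵐ ω ∂μ, X ω = x ∨ X ω = y) :
    (∫ ω, X ω ∂μ) - exp (∫ ω, log (X ω) ∂μ) ≤
      max (2 * Var[fun ω ↦ √(X ω); μ]) (∫ ω, (√(X ω) - √(essInf X μ)) ^ 2 ∂μ) := by
  obtain ⟨a, b, p, hab, hp, h_law⟩ := exists_le_hasLaw_bernoulliMeasure hX h_two
  obtain ⟨ω, hω, hω0⟩ :=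
    ((frequently_eq_of_hasLaw_bernoulliMeasure h_law hp).and_eventually h_nonneg).exists
  have ha : 0 ≤ a := hω ▸ hω0
  have hb : 0 ≤ b := ha.trans hab
  rw [variance_sqrt_of_hasLaw_bernoulliMeasure h_law,
    integral_sqrt_sub_sqrt_essInf_sq_of_hasLaw_bernoulliMeasure hab hp h_law]
  refine (integral_sub_exp_integral_log_le_amGmGap h_law hb).trans ?_
  simpa [sq_sqrt ha, sq_sqrt hb] using
    amGmGap_sq_add_sq_le p.2.2 (sqrt_nonneg a) (sub_nonneg.2 (sqrt_le_sqrt hab))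

theorem exists_mul_one_sub_mul_sq_eq_and_one_sub_mul_sq_eq {V E : ℝ} (hV : 0 < V) (hVE : V < E) :
    ∃ p : I, 0 < p ∧ ∃ h : ℝ, 0 < h ∧ p * (1 - p) * h ^ 2 = V ∧ (1 - p) * h ^ 2 = E := by
  have hE : 0 < E := hV.trans hVE
  have hEV : 0 < E - V := sub_pos.2 hVE
  have h_sq : (E / √(E - V)) ^ 2 = E ^ 2 / (E - V) := by rw [div_pow, sq_sqrt hEV.le]
  refine ⟨⟨V / E, by positivity, (div_le_one hE).2 hVE.le⟩, Subtype.coe_lt_coe.1 (div_pos hV hE),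
    E / √(E - V), by positivity, ?_, ?_⟩ <;> simp only [h_sq] <;> field_simp

theorem exists_bool_pos_lt_integral_sub_exp_integral_log {V E c : ℝ} (hV : 0 < V)
    (hVE : V < E) (hc : c < max (2 * V) E) :
    ∃ (μ : Measure Bool) (_ : IsProbabilityMeasure μ) (X : Bool → ℝ), (∀ b, 0 < X b) ∧
      Var[fun b ↦ √(X b); μ] = V ∧ ∫ b, (√(X b) - √(essInf X μ)) ^ 2 ∂μ = E ∧
      c < (∫ b, X b ∂μ) - exp (∫ b, log (X b) ∂μ) := by
  obtain ⟨p, hp, h, hh, rfl, rfl⟩ := exists_mul_one_sub_mul_sq_eq_and_one_sub_mul_sq_eq hV hVE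
  obtain ⟨a, ha, hac⟩ := exists_pos_lt_amGmGap hp p.2.2 hh hc
  let X : Bool → ℝ := fun b ↦ cond b ((a + h) ^ 2) (a ^ 2)
  have h_law : HasLaw X Ber(a ^ 2, (a + h) ^ 2, p) Ber(false, true, p) :=
    ⟨(measurable_of_finite X).aemeasurable, map_bernoulliMeasure false true X p⟩
  have h_le : a ^ 2 ≤ (a + h) ^ 2 := by gcongr; linarith
  have h_sqrt : √((a + h) ^ 2) - √(a ^ 2) = h := by
    rw [sqrt_sq (by positivity), sqrt_sq ha.le, add_sub_cancel_left]
  refine ⟨Ber(false, true, p), inferInstance, X, ?_, ?_, ?_, ?_⟩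
  · rintro (_ | _) <;> simp only [X, cond_true, cond_false] <;> positivity
  · rw [variance_sqrt_of_hasLaw_bernoulliMeasure h_law, h_sqrt]
  · rw [integral_sqrt_sub_sqrt_essInf_sq_of_hasLaw_bernoulliMeasure h_le hp h_law, h_sqrt]
  · rwa [integral_sub_exp_integral_log_eq_amGmGap h_law (by positivity) (by positivity)]

end TwoValued

/-- Theorem, upper bound over two-valued random variables: for `E > V > 0`, the
supremum of `D_X = E X - exp (E log X)` over nonnegative random variables `X` taking
at most two values, with `log X` integrable, `Var √X = V` and
`E (√X - √(essInf X))² = E`, equals `max (2V) E`; in particular, for every `δ > 0`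
there is such an `X` taking at most two positive values with `D_X > max (2V) E - δ`. -/
theorem sup_D_two_valued (V E : ℝ) (hV : 0 < V) (hVE : V < E) :
    sSup {d : ℝ |
      ∃ (Ω : Type) (_ : MeasurableSpace Ω) (μ : Measure Ω) (_ : IsProbabilityMeasure μ)
        (X : Ω → ℝ), Measurable X ∧ (∀ ω, 0 ≤ X ω) ∧ Integrable X μ ∧
        Integrable (fun ω => Real.log (X ω)) μ ∧
        (∃ x y : ℝ, ∀ ω, X ω = x ∨ X ω = y) ∧
        variance (fun ω => Real.sqrt (X ω)) μ = V ∧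
        (∫ ω, (Real.sqrt (X ω) - Real.sqrt (essInf X μ)) ^ 2 ∂μ) = E ∧
        d = (∫ ω, X ω ∂μ) - Real.exp (∫ ω, Real.log (X ω) ∂μ)} = max (2 * V) E ∧
    ∀ δ : ℝ, 0 < δ →
      ∃ (Ω : Type) (_ : MeasurableSpace Ω) (μ : Measure Ω) (_ : IsProbabilityMeasure μ)
        (X : Ω → ℝ), Measurable X ∧ Integrable X μ ∧
        Integrable (fun ω => Real.log (X ω)) μ ∧
        (∃ x y : ℝ, 0 < x ∧ 0 < y ∧ ∀ ω, X ω = x ∨ X ω = y) ∧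
        variance (fun ω => Real.sqrt (X ω)) μ = V ∧
        (∫ ω, (Real.sqrt (X ω) - Real.sqrt (essInf X μ)) ^ 2 ∂μ) = E ∧
        (∫ ω, X ω ∂μ) - Real.exp (∫ ω, Real.log (X ω) ∂μ) > max (2 * V) E - δ := by
  have h_values (X : Bool → ℝ) (b : Bool) : X b = X false ∨ X b = X true := by
    cases b <;> simp
  refine ⟨csSup_eq_of_forall_le_of_forall_lt_exists_lt ?_ fun c hc ↦ ?_, fun δ hδ ↦ ?_⟩
  · rintro _ ⟨Ω, _, μ, _, X, hX, h_nonneg, -, -, ⟨x, y, h_two⟩, rfl, rfl, rfl⟩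
    exact integral_sub_exp_integral_log_le_max hX.aemeasurable (.of_forall h_nonneg)
      (.of_forall h_two)
  · obtain ⟨μ, hμ, X, h_pos, h_var, h_int, h_lt⟩ :=
      exists_bool_pos_lt_integral_sub_exp_integral_log hV hVE hc
    exact ⟨_, ⟨Bool, _, μ, hμ, X, measurable_of_finite X, fun b ↦ (h_pos b).le, .of_finite,
      .of_finite, ⟨_, _, h_values X⟩, h_var, h_int, rfl⟩, h_lt⟩
  · obtain ⟨μ, hμ, X, h_pos, h_var, h_int, h_lt⟩ :=
      exists_bool_pos_lt_integral_sub_exp_integral_log hV hVE (sub_lt_self (max (2 * V) E) hδ)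
    exact ⟨Bool, _, μ, hμ, X, measurable_of_finite X, .of_finite, .of_finite,
      ⟨_, _, h_pos false, h_pos true, h_values X⟩, h_var, h_int, h_lt⟩
end

section
/- Let 0 ≤ u < v be real numbers, p ∈ (0,1), and q := 1 − p. Define ψ(c) := p(u+c)² + q(v+c)² − (u+c)^{2p}·(v+c)^{2q} for c ∈ (−u, ∞). Then ψ(c) → 2pq(v−u)² as c → ∞. -/
open Real Filter

/-!
Put `m = ∑ i, w i * x i` and `a = m + c`, and measure the points from their mean: `y i = x i - m`.
Since `∑ i, w i * y i = 0`, the weighted square mean of the `x i + c = a + y i` is exactly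
`a ^ 2 + V` with `V = ∑ i, w i * y i ^ 2`, and the first-order terms of `log (1 + y i / a)` cancel,
so that `∑ i, w i * log (1 + y i / a) = -V / (2 * a ^ 2) + O(1 / a ^ 3)`. Hence the squared
geometric mean is `a ^ 2 * exp (-V / a ^ 2 + O(1 / a ^ 3)) = a ^ 2 - V + o(1)`, and the difference
of the two tends to `2 * V`.
-/

section

open Asymptotics Topology

theorem log_one_add_sub_taylor_isBigO :
    (fun x : ℝ ↦ log (1 + x) - (x - x ^ 2 / 2)) =O[𝓝 0] fun x ↦ x ^ 3 := by
  refine IsBigO.of_bound 2 ?_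
  have hsmall : ∀ᶠ x : ℝ in 𝓝 0, |x| < 1 / 2 := by
    simpa using eventually_abs_sub_lt (0 : ℝ) one_half_pos
  filter_upwards [hsmall] with x hx
  have hx' : |-x| < 1 := by rw [abs_neg]; linarith
  calc ‖log (1 + x) - (x - x ^ 2 / 2)‖
      = |(∑ i ∈ Finset.range 2, (-x) ^ (i + 1) / (i + 1)) + log (1 - -x)| := by
        rw [norm_eq_abs, Finset.sum_range_succ, Finset.sum_range_one]
        push_cast
        ring_nf
    _ ≤ |-x| ^ 3 / (1 - |-x|) := abs_log_sub_add_sum_range_le hx' 2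
    _ ≤ 2 * ‖x ^ 3‖ := by
        rw [abs_neg, norm_eq_abs, abs_pow, div_le_iff₀ (by linarith)]
        nlinarith [pow_nonneg (abs_nonneg x) 3]

theorem tendsto_sq_mul_log_one_add_div_sub_atTop (y : ℝ) :
    Tendsto (fun a : ℝ ↦ a ^ 2 * (log (1 + y / a) - y / a)) atTop (𝓝 (-y ^ 2 / 2)) := by
  have hy : Tendsto (fun a : ℝ ↦ y / a) atTop (𝓝 0) := tendsto_id.const_div_atTop y
  have hremainder : Tendsto
      (fun a : ℝ ↦ a ^ 2 * (log (1 + y / a) - (y / a - (y / a) ^ 2 / 2))) atTop (𝓝 0) := by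
    refine ((isBigO_refl (fun a : ℝ ↦ a ^ 2) atTop).mul
      (log_one_add_sub_taylor_isBigO.comp_tendsto hy)).trans_tendsto ?_
    refine (tendsto_id.const_div_atTop (y ^ 3)).congr' ?_
    filter_upwards [eventually_ne_atTop 0] with a ha
    simp only [Function.comp_apply, id_eq]
    field_simp
  rw [← zero_add (-y ^ 2 / 2)]
  refine (hremainder.add_const _).congr' ?_
  filter_upwards [eventually_ne_atTop 0] with a ha
  field_simp
  ring

theorem tendsto_mul_exp_sub_one_of_tendsto {α : Type*} {l : Filter α} {r f : α → ℝ} {t : ℝ}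
    (hr : Tendsto r l atTop) (hrf : Tendsto (fun n ↦ r n * f n) l (𝓝 t)) :
    Tendsto (fun n ↦ r n * (exp (f n) - 1)) l (𝓝 t) := by
  have hf : Tendsto f l (𝓝 0) := by
    refine (hrf.div_atTop hr).congr' ?_
    filter_upwards [hr.eventually_ne_atTop 0] with n hn
    exact mul_div_cancel_left₀ (f n) hn
  simpa using (hasDerivAt_exp 0).hasFDerivAt.hasFDerivWithinAt.lim hf
    (.of_forall fun n ↦ Set.mem_univ _) hrf

variable {ι : Type*} {s : Finset ι} {w : ι → ℝ}

theorem tendsto_sq_mul_sum_log_one_add_div_atTop {y : ι → ℝ} (hy : ∑ i ∈ s, w i * y i = 0) :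
    Tendsto (fun a : ℝ ↦ a ^ 2 * ∑ i ∈ s, w i * log (1 + y i / a)) atTop
      (𝓝 (-(∑ i ∈ s, w i * y i ^ 2) / 2)) := by
  have hterms := tendsto_finsetSum s fun i _ ↦
    (tendsto_sq_mul_log_one_add_div_sub_atTop (y i)).const_mul (w i)
  convert hterms using 2 with a
  · have hlinear : ∑ i ∈ s, w i * (y i / a) = 0 := by
      simp only [← mul_div_assoc, ← Finset.sum_div, hy, zero_div]
    calc a ^ 2 * ∑ i ∈ s, w i * log (1 + y i / a)
        = a ^ 2 * (∑ i ∈ s, w i * log (1 + y i / a) - ∑ i ∈ s, w i * (y i / a)) := by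
          rw [hlinear, sub_zero]
      _ = ∑ i ∈ s, w i * (a ^ 2 * (log (1 + y i / a) - y i / a)) := by
          rw [← Finset.sum_sub_distrib, Finset.mul_sum]
          exact Finset.sum_congr rfl fun i _ ↦ by ring
  · rw [← Finset.sum_neg_distrib, Finset.sum_div]
    exact Finset.sum_congr rfl fun i _ ↦ by ring

theorem prod_add_rpow_two_mul_eq_sq_mul_exp {y : ι → ℝ} {a : ℝ} (hw : ∑ i ∈ s, w i = 1)
    (ha : 0 < a) (hay : ∀ i ∈ s, 0 < a + y i) :
    ∏ i ∈ s, (a + y i) ^ (2 * w i) =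
      a ^ 2 * exp (2 * ∑ i ∈ s, w i * log (1 + y i / a)) := by
  have hfactor (i : ι) (hi : i ∈ s) :
      (a + y i) ^ (2 * w i) = a ^ (2 * w i) * exp (2 * (w i * log (1 + y i / a))) := by
    have hquot : 1 + y i / a = (a + y i) / a := by field_simp
    rw [hquot, log_div (hay i hi).ne' ha.ne', rpow_def_of_pos (hay i hi), rpow_def_of_pos ha,
      ← exp_add]
    ring_nf
  rw [Finset.prod_congr rfl hfactor, Finset.prod_mul_distrib, ← rpow_sum_of_pos ha, ← exp_sum,
    ← Finset.mul_sum, ← Finset.mul_sum, hw, mul_one, rpow_two]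

theorem tendsto_sq_sub_prod_add_rpow_atTop {y : ι → ℝ} (hw : ∑ i ∈ s, w i = 1)
    (hy : ∑ i ∈ s, w i * y i = 0) :
    Tendsto (fun a : ℝ ↦ a ^ 2 - ∏ i ∈ s, (a + y i) ^ (2 * w i)) atTop
      (𝓝 (∑ i ∈ s, w i * y i ^ 2)) := by
  have hlog : Tendsto (fun a : ℝ ↦ a ^ 2 * (2 * ∑ i ∈ s, w i * log (1 + y i / a))) atTop
      (𝓝 (-∑ i ∈ s, w i * y i ^ 2)) := by
    convert (tendsto_sq_mul_sum_log_one_add_div_atTop hy).const_mul 2 using 2 <;> ring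
  have hexp := (tendsto_mul_exp_sub_one_of_tendsto (tendsto_pow_atTop two_ne_zero) hlog).neg
  rw [neg_neg] at hexp
  refine hexp.congr' ?_
  have hpos : ∀ᶠ a : ℝ in atTop, ∀ i ∈ s, 0 < a + y i :=
    (Finset.eventually_all s).2 fun i _ ↦
      (tendsto_atTop_add_const_right atTop (y i) tendsto_id).eventually_gt_atTop 0
  filter_upwards [eventually_gt_atTop 0, hpos] with a ha hay
  rw [prod_add_rpow_two_mul_eq_sq_mul_exp hw ha hay]
  ring

theorem sum_mul_sub_weighted_mean_eq_zero (x : ι → ℝ) (hw : ∑ i ∈ s, w i = 1) :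
    ∑ i ∈ s, w i * (x i - ∑ j ∈ s, w j * x j) = 0 := by
  simp only [mul_sub, Finset.sum_sub_distrib, ← Finset.sum_mul, hw, one_mul, sub_self]

theorem sum_mul_add_sq_of_sum_mul_eq_zero {y : ι → ℝ} (a : ℝ) (hw : ∑ i ∈ s, w i = 1)
    (hy : ∑ i ∈ s, w i * y i = 0) :
    ∑ i ∈ s, w i * (a + y i) ^ 2 = a ^ 2 + ∑ i ∈ s, w i * y i ^ 2 := by
  have hexpand (i : ι) :
      w i * (a + y i) ^ 2 = w i * a ^ 2 + w i * y i * (2 * a) + w i * y i ^ 2 := by ring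
  simp only [hexpand, Finset.sum_add_distrib, ← Finset.sum_mul, hw, hy, one_mul, zero_mul,
    add_zero]

theorem psi_tendsto_atTop_general (x : ι → ℝ) (hw : ∑ i ∈ s, w i = 1) :
    Tendsto
      (fun c : ℝ ↦ ∑ i ∈ s, w i * (x i + c) ^ 2 - ∏ i ∈ s, (x i + c) ^ (2 * w i))
      atTop (𝓝 (2 * ∑ i ∈ s, w i * (x i - ∑ j ∈ s, w j * x j) ^ 2)) := by
  have hcentered := sum_mul_sub_weighted_mean_eq_zero x hw
  set m := ∑ j ∈ s, w j * x j
  have hshift : Tendsto (fun c : ℝ ↦ m + c) atTop atTop :=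
    tendsto_atTop_add_const_left atTop m tendsto_id
  have hlim := ((tendsto_sq_sub_prod_add_rpow_atTop hw hcentered).comp hshift).add_const
    (∑ i ∈ s, w i * (x i - m) ^ 2)
  rw [← two_mul] at hlim
  refine hlim.congr fun c ↦ ?_
  have hpoint (i : ι) : x i + c = m + c + (x i - m) := by ring
  simp only [Function.comp_apply, hpoint, sum_mul_add_sq_of_sum_mul_eq_zero (m + c) hw hcentered]
  ring

end

/-- Limit at infinity of `ψ(c) = p (u+c)² + q (v+c)² - (u+c)^{2p} (v+c)^{2q}`:
`ψ(c) → 2 p q (v-u)²` as `c → ∞`. -/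
theorem psi_tendsto_atTop (u v p : ℝ) (hu : 0 ≤ u) (huv : u < v)
    (hp : p ∈ Set.Ioo (0 : ℝ) 1) (q : ℝ) (hq : q = 1 - p) :
    Tendsto
      (fun c : ℝ => p * (u + c) ^ 2 + q * (v + c) ^ 2 -
        (u + c) ^ (2 * p) * (v + c) ^ (2 * q))
      atTop (nhds (2 * p * q * (v - u) ^ 2)) := by
  convert psi_tendsto_atTop_general (s := Finset.univ) (w := ![p, q]) ![u, v] (by simp [hq])
    using 2 <;> simp [hq]
  ring
end

section
/- Let 0 ≤ u < v be real numbers, p ∈ (0,1), and q := 1 − p. Define ψ(c) := p(u+c)² + q(v+c)² − (u+c)^{2p}·(v+c)^{2q} for c ∈ [−u, ∞). Then ψ is monotone on [−u, ∞): nondecreasing if p ≥ q and nonincreasing if p ≤ q. Consequently, sup_{c ∈ [−u,∞)} ψ(c) = max(q(v−u)², 2pq(v−u)²) and inf_{c ∈ [−u,∞)} ψ(c) = min(q(v−u)², 2pq(v−u)²), with ψ(−u) = q(v−u)². -/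
open Real Filter

/-!
Write `x = u + c`, `y = v + c`, `t = y / x`, so that `ψ = x² (p + q t² - t^{2q})`.

Since `p + q = 1`, the derivative in `c` is `2 ((p x + q y) - (p y + q x) (x / y) ^ (p - q))`, and
its sign is that of `p - q` by the inequality
`(a x + b y) / (a y + b x) ≤ (y / x) ^ (b - a)` for `a ≤ b`, `a + b = 1`, `x ≤ y`.
In terms of `m = (y - x) / (y + x)` and `s = b - a` this inequality reads
`artanh (s m) ≤ s artanh m`, which holds termwise in the power series of `artanh`.

As `c → ∞` we have `t → 1` while `x (t - 1) = v - u` stays fixed, so the second-order Taylor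
expansion of `t ^ (2q)` at `1` gives `ψ → 2pq (v - u)²`.
-/

open Set Topology

section MonotoneLimit

variable {α β : Type*} [SemilatticeSup α]
  [LinearOrder β] [TopologicalSpace β] [OrderClosedTopology β] {f : α → β} {a : α} {L : β}

theorem isLUB_image_Ici_max_of_tendsto (hf : MonotoneOn f (Ici a) ∨ AntitoneOn f (Ici a))
    (hL : Tendsto f atTop (𝓝 L)) : IsLUB (f '' Ici a) (max (f a) L) := by
  have hL' : Tendsto ((Ici a).domRestrict f) atTop (𝓝 L) := tendsto_comp_val_Ici_atTop.2 hL
  rcases hf with hmono | hanti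
  · have hLUB : IsLUB (f '' Ici a) L := by
      rw [← range_domRestrict]
      exact isLUB_of_tendsto_atTop (monotoneOn_iff_monotone.1 hmono) hL'
    rwa [max_eq_right (hLUB.1 (mem_image_of_mem f self_mem_Ici))]
  · have hfa : L ≤ f a :=
      (antitoneOn_iff_antitone.1 hanti).le_of_tendsto hL' ⟨a, self_mem_Ici⟩
    rw [max_eq_left hfa]
    exact (hanti.map_isLeast isLeast_Ici).isLUB

theorem isGLB_image_Ici_min_of_tendsto (hf : MonotoneOn f (Ici a) ∨ AntitoneOn f (Ici a))
    (hL : Tendsto f atTop (𝓝 L)) : IsGLB (f '' Ici a) (min (f a) L) :=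
  isLUB_image_Ici_max_of_tendsto (β := βᵒᵈ)
    (hf.symm.imp AntitoneOn.dual_right MonotoneOn.dual_right) hL

end MonotoneLimit

theorem hasSum_artanh {x : ℝ} (hx : |x| < 1) :
    HasSum (fun k : ℕ ↦ x ^ (2 * k + 1) / (2 * k + 1)) (artanh x) := by
  obtain ⟨hx₁, hx₂⟩ := abs_lt.1 hx
  have hlog : artanh x = 1 / 2 * (log (1 + x) - log (1 - x)) := by
    rw [artanh_eq_half_log ⟨hx₁.le, hx₂.le⟩, log_div (by linarith) (by linarith)]
  rw [hlog]
  convert! (hasSum_log_sub_log_of_abs_lt_one hx).mul_left (1 / 2) using 2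
  ring

theorem artanh_mul_le {s m : ℝ} (hs : s ∈ Icc 0 1) (hm : m ∈ Ico 0 1) :
    artanh (s * m) ≤ s * artanh m := by
  have hsm : |s * m| < 1 := by
    rw [abs_of_nonneg (mul_nonneg hs.1 hm.1)]
    exact (mul_le_of_le_one_left hm.1 hs.2).trans_lt hm.2
  have hm' : |m| < 1 := by rw [abs_of_nonneg hm.1]; exact hm.2
  refine hasSum_le (fun k ↦ ?_) (hasSum_artanh hsm) ((hasSum_artanh hm').mul_left s)
  have hpow : s ^ (2 * k + 1) ≤ s := pow_le_of_le_one hs.1 hs.2 (by lia)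
  have hterm : 0 ≤ m ^ (2 * k + 1) / (2 * (k : ℝ) + 1) :=
    div_nonneg (pow_nonneg hm.1 _) (by positivity)
  rw [mul_pow, mul_div_assoc]
  exact mul_le_mul_of_nonneg_right hpow hterm

theorem weighted_sum_div_le_div_rpow {a b x y : ℝ} (ha : 0 ≤ a) (hab : a ≤ b) (hsum : a + b = 1)
    (hx : 0 < x) (hxy : x ≤ y) :
    (a * x + b * y) / (a * y + b * x) ≤ (y / x) ^ (b - a) := by
  have hy : 0 < y := hx.trans_le hxy
  have hb : 0 < b := by linarith
  have hnum : 0 < a * x + b * y := by positivity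
  have hden : 0 < a * y + b * x := by positivity
  obtain rfl : a = 1 - b := by linarith
  set s := b - (1 - b) with hs_def
  set m := (y - x) / (y + x) with hm_def
  have hs : s ∈ Icc 0 1 := ⟨by linarith, by linarith⟩
  have hm : m ∈ Ico 0 1 :=
    ⟨div_nonneg (by linarith) (by linarith), (div_lt_one (by linarith)).2 (by linarith)⟩
  have hsm : s * m ∈ Ico 0 1 :=
    ⟨mul_nonneg hs.1 hm.1, (mul_le_of_le_one_left hm.1 hs.2).trans_lt hm.2⟩
  have hratio_m : (1 + m) / (1 - m) = y / x := by
    have h : 1 - m ≠ 0 := by linarith [hm.2]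
    rw [div_eq_div_iff h hx.ne', hm_def]
    field_simp
    ring
  have hratio_sm : (1 + s * m) / (1 - s * m) =
      ((1 - b) * x + b * y) / ((1 - b) * y + b * x) := by
    have h : 1 - s * m ≠ 0 := by linarith [hsm.2]
    rw [div_eq_div_iff h hden.ne', hm_def, hs_def]
    field_simp
    ring
  have hartanh := artanh_mul_le hs hm
  rw [artanh_eq_half_log ⟨by linarith [hsm.1], hsm.2.le⟩,
    artanh_eq_half_log ⟨by linarith [hm.1], hm.2.le⟩, hratio_m, hratio_sm] at hartanh
  rw [← log_le_log_iff (by positivity) (by positivity), log_rpow (by positivity)]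
  linarith

theorem tendsto_rpow_sub_linear_div_sq (r : ℝ) :
    Tendsto (fun t : ℝ ↦ (t ^ r - 1 - r * (t - 1)) / (t - 1) ^ 2) (𝓝[≠] 1)
      (𝓝 (r * (r - 1) / 2)) := by
  have hsmooth : ContDiffOn ℝ (2 : ℕ) (fun t : ℝ ↦ t ^ r) (Ioi 0) := fun t ht ↦
    (contDiffAt_rpow_const_of_ne (ne_of_gt ht)).contDiffWithinAt
  have hpoly (t : ℝ) : taylorWithinEval (fun t : ℝ ↦ t ^ r) 2 (Ioi 0) 1 t =
      1 + r * (t - 1) + r * (r - 1) / 2 * (t - 1) ^ 2 := by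
    have hderiv (k : ℕ) : iteratedDerivWithin k (fun t : ℝ ↦ t ^ r) (Ioi 0) 1 =
        (descPochhammer ℝ k).eval r := by
      rw [iteratedDerivWithin_of_isOpen isOpen_Ioi (mem_Ioi.2 one_pos), iteratedDeriv_eq_iterate,
        iter_deriv_rpow_const, one_rpow, mul_one]
    simp only [taylor_within_apply, hderiv, smul_eq_mul, Finset.sum_range_succ,
      Finset.sum_range_zero, descPochhammer_succ_right, descPochhammer_zero, Polynomial.eval_mul,
      Polynomial.eval_sub, Polynomial.eval_X, Polynomial.eval_natCast, Polynomial.eval_one]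
    norm_num [Nat.factorial]
    ring
  have htaylor := (Real.taylor_tendsto (convex_Ioi 0) (mem_Ioi.2 one_pos) hsmooth).add_const
    (r * (r - 1) / 2)
  rw [isOpen_Ioi.nhdsWithin_eq (mem_Ioi.2 one_pos), zero_add] at htaylor
  refine (htaylor.mono_left nhdsWithin_le_nhds).congr' ?_
  filter_upwards [self_mem_nhdsWithin] with t ht
  have ht' : t - 1 ≠ 0 := sub_ne_zero.2 ht
  rw [hpoly]
  field_simp
  ring

theorem tendsto_add_div_add_atTop_nhdsNE_one {u v : ℝ} (huv : u ≠ v) :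
    Tendsto (fun c ↦ (v + c) / (u + c)) atTop (𝓝[≠] 1) := by
  have hx : Tendsto (fun c ↦ u + c) atTop atTop := tendsto_atTop_add_const_left _ u tendsto_id
  have heq : ∀ᶠ c in atTop, 1 + (v - u) / (u + c) = (v + c) / (u + c) := by
    filter_upwards [hx.eventually_ne_atTop 0] with c hc
    field_simp
    ring
  refine tendsto_nhdsWithin_iff.2 ⟨?_, ?_⟩
  · simpa only [add_zero] using ((hx.const_div_atTop (v - u)).const_add 1).congr' heq
  · filter_upwards [hx.eventually_ne_atTop 0] with c hc
    rw [mem_compl_singleton_iff, Ne, div_eq_one_iff_eq hc, add_left_inj]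
    exact huv.symm

/-- The gap `E[Y²] - exp (E[log Y²])` between the arithmetic and the geometric mean of `Y²`, for a
random variable `Y` equal to `x` with probability `p` and to `y` with probability `q`. The
geometric mean is written with real powers, so that it makes sense at `x = 0` or `y = 0`. -/
noncomputable def sqAmGmGap (p q x y : ℝ) : ℝ :=
  p * x ^ 2 + q * y ^ 2 - x ^ (2 * p) * y ^ (2 * q)

section Gap

variable {p q u v : ℝ}

theorem sqAmGmGap_zero_left (hp : p ≠ 0) (q y : ℝ) : sqAmGmGap p q 0 y = q * y ^ 2 := by
  rw [sqAmGmGap, zero_rpow (mul_ne_zero two_ne_zero hp)]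
  ring

theorem hasDerivAt_sqAmGmGap_add {c : ℝ} (hpq : p + q = 1) (hx : 0 < u + c) (hy : 0 < v + c) :
    HasDerivAt (fun c ↦ sqAmGmGap p q (u + c) (v + c))
      (2 * ((p * (u + c) + q * (v + c)) -
        (p * (v + c) + q * (u + c)) * ((u + c) / (v + c)) ^ (p - q))) c := by
  have hdx : HasDerivAt (fun c ↦ u + c) 1 c := (hasDerivAt_id c).const_add u
  have hdy : HasDerivAt (fun c ↦ v + c) 1 c := (hasDerivAt_id c).const_add v
  refine ((((hdx.pow 2).const_mul p).add ((hdy.pow 2).const_mul q)).sub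
    ((hdx.rpow_const (p := 2 * p) (Or.inl hx.ne')).mul
      (hdy.rpow_const (p := 2 * q) (Or.inl hy.ne')))).congr_deriv ?_
  have hxpow : (u + c) ^ (2 * p) = (u + c) ^ (p - q) * (u + c) := by
    rw [← rpow_add_one hx.ne']
    congr 1
    linarith
  have hypow : (v + c) ^ (2 * q) = ((v + c) ^ (p - q))⁻¹ * (v + c) := by
    rw [← rpow_neg hy.le, ← rpow_add_one hy.ne']
    congr 1
    linarith
  have hypow' : (v + c) ^ (2 * q - 1) = ((v + c) ^ (p - q))⁻¹ := by
    rw [← rpow_neg hy.le]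
    congr 1
    linarith
  rw [hxpow, hypow, hypow', show 2 * p - 1 = p - q by linarith, div_rpow hx.le hy.le]
  push_cast
  ring

theorem continuousOn_sqAmGmGap_add (hp : 0 ≤ p) (huv : u < v) :
    ContinuousOn (fun c ↦ sqAmGmGap p q (u + c) (v + c)) (Ici (-u)) := by
  have hxpow : ContinuousOn (fun c ↦ (u + c) ^ (2 * p)) (Ici (-u)) :=
    ContinuousOn.rpow_const (by fun_prop) fun c _ ↦ Or.inr (by linarith)
  have hypow : ContinuousOn (fun c ↦ (v + c) ^ (2 * q)) (Ici (-u)) :=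
    ContinuousOn.rpow_const (by fun_prop) fun c hc ↦ Or.inl (by linarith [mem_Ici.1 hc])
  have hsq : ContinuousOn (fun c ↦ p * (u + c) ^ 2 + q * (v + c) ^ 2) (Ici (-u)) := by fun_prop
  exact hsq.sub (hxpow.mul hypow)

theorem monotoneOn_sqAmGmGap_add (hpq : p + q = 1) (hq : 0 ≤ q) (hq_le : q ≤ p) (huv : u < v) :
    MonotoneOn (fun c ↦ sqAmGmGap p q (u + c) (v + c)) (Ici (-u)) := by
  have hpos {c : ℝ} (hc : c ∈ interior (Ici (-u))) : 0 < u + c ∧ 0 < v + c := by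
    rw [interior_Ici, mem_Ioi] at hc
    exact ⟨by linarith, by linarith⟩
  refine monotoneOn_of_hasDerivWithinAt_nonneg (convex_Ici _)
    (continuousOn_sqAmGmGap_add (hq.trans hq_le) huv) (fun c hc ↦
      (hasDerivAt_sqAmGmGap_add hpq (hpos hc).1 (hpos hc).2).hasDerivWithinAt) fun c hc ↦ ?_
  obtain ⟨hx, hy⟩ := hpos hc
  have hp : 0 < p := by linarith
  have hratio := weighted_sum_div_le_div_rpow hq hq_le (by linarith) hx (add_le_add_left huv.le c)
  rw [div_le_iff₀ (by positivity)] at hratio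
  have hle : (p * (v + c) + q * (u + c)) * ((u + c) / (v + c)) ^ (p - q) ≤
      p * (u + c) + q * (v + c) := by
    rw [← inv_div, inv_rpow (by positivity), ← div_eq_mul_inv, div_le_iff₀ (by positivity)]
    linarith
  linarith

theorem antitoneOn_sqAmGmGap_add (hpq : p + q = 1) (hp : 0 ≤ p) (hp_le : p ≤ q) (huv : u < v) :
    AntitoneOn (fun c ↦ sqAmGmGap p q (u + c) (v + c)) (Ici (-u)) := by
  have hpos {c : ℝ} (hc : c ∈ interior (Ici (-u))) : 0 < u + c ∧ 0 < v + c := by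
    rw [interior_Ici, mem_Ioi] at hc
    exact ⟨by linarith, by linarith⟩
  refine antitoneOn_of_hasDerivWithinAt_nonpos (convex_Ici _)
    (continuousOn_sqAmGmGap_add hp huv) (fun c hc ↦
      (hasDerivAt_sqAmGmGap_add hpq (hpos hc).1 (hpos hc).2).hasDerivWithinAt) fun c hc ↦ ?_
  obtain ⟨hx, hy⟩ := hpos hc
  have hq : 0 < q := by linarith
  have hratio := weighted_sum_div_le_div_rpow hp hp_le hpq hx (add_le_add_left huv.le c)
  rw [div_le_iff₀ (by positivity)] at hratio
  have hle : p * (u + c) + q * (v + c) ≤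
      (p * (v + c) + q * (u + c)) * ((u + c) / (v + c)) ^ (p - q) := by
    rw [← inv_div, inv_rpow (by positivity), ← rpow_neg (by positivity), neg_sub]
    linarith
  linarith

theorem sqAmGmGap_eq_sq_mul {x y : ℝ} (hpq : p + q = 1) (hx : 0 < x) (hy : 0 ≤ y) (hxy : x ≠ y) :
    sqAmGmGap p q x y = (y - x) ^ 2 *
      (q - ((y / x) ^ (2 * q) - 1 - 2 * q * (y / x - 1)) / (y / x - 1) ^ 2) := by
  have hgm : x ^ (2 * p) * y ^ (2 * q) = x ^ 2 * (y / x) ^ (2 * q) := by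
    rw [div_rpow hy hx.le, mul_div_assoc', mul_div_right_comm, ← rpow_natCast x 2, ← rpow_sub hx]
    congr 2
    push_cast
    linarith
  have hyx : y - x ≠ 0 := sub_ne_zero.2 hxy.symm
  obtain rfl : p = 1 - q := by linarith
  rw [sqAmGmGap, hgm, div_sub_one hx.ne']
  field_simp
  ring

theorem tendsto_sqAmGmGap_add_atTop (hpq : p + q = 1) (huv : u ≠ v) :
    Tendsto (fun c ↦ sqAmGmGap p q (u + c) (v + c)) atTop (𝓝 (2 * p * q * (v - u) ^ 2)) := by
  have hremainder := (tendsto_rpow_sub_linear_div_sq (2 * q)).comp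
    (tendsto_add_div_add_atTop_nhdsNE_one huv)
  have hlimit : (v - u) ^ 2 * (q - 2 * q * (2 * q - 1) / 2) = 2 * p * q * (v - u) ^ 2 := by
    obtain rfl : p = 1 - q := by linarith
    ring
  rw [← hlimit]
  refine ((hremainder.const_sub q).const_mul ((v - u) ^ 2)).congr' ?_
  filter_upwards [eventually_gt_atTop (-u), eventually_gt_atTop (-v)] with c hcu hcv
  rw [sqAmGmGap_eq_sq_mul hpq (by linarith) (by linarith) (by simpa using huv),
    add_sub_add_right_eq_sub]
  rfl

end Gap

theorem psi_monotone_sup_inf_general {u v p q : ℝ} (huv : u < v) (hp : 0 < p) (hq : 0 ≤ q)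
    (hpq : p + q = 1) {ψ : ℝ → ℝ} (hψ : ∀ c, ψ c = sqAmGmGap p q (u + c) (v + c)) :
    (q ≤ p → MonotoneOn ψ (Ici (-u))) ∧
    (p ≤ q → AntitoneOn ψ (Ici (-u))) ∧
    IsLUB (ψ '' Ici (-u)) (max (q * (v - u) ^ 2) (2 * p * q * (v - u) ^ 2)) ∧
    IsGLB (ψ '' Ici (-u)) (min (q * (v - u) ^ 2) (2 * p * q * (v - u) ^ 2)) ∧
    ψ (-u) = q * (v - u) ^ 2 := by
  obtain rfl : ψ = fun c ↦ sqAmGmGap p q (u + c) (v + c) := funext hψ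
  have hmono := fun hq_le ↦ monotoneOn_sqAmGmGap_add hpq hq hq_le huv
  have hanti := fun hp_le ↦ antitoneOn_sqAmGmGap_add hpq hp.le hp_le huv
  have hlim := tendsto_sqAmGmGap_add_atTop hpq huv.ne
  have hleft : sqAmGmGap p q (u + -u) (v + -u) = q * (v - u) ^ 2 := by
    rw [add_neg_cancel, sqAmGmGap_zero_left hp.ne', sub_eq_add_neg]
  have hmono_or_anti := (le_total q p).imp hmono hanti
  refine ⟨hmono, hanti, ?_, ?_, hleft⟩
  · rw [← hleft]
    exact isLUB_image_Ici_max_of_tendsto hmono_or_anti hlim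
  · rw [← hleft]
    exact isGLB_image_Ici_min_of_tendsto hmono_or_anti hlim

/-- Monotonicity of `ψ(c) = p (u+c)² + q (v+c)² - (u+c)^{2p} (v+c)^{2q}` on `[-u, ∞)`:
nondecreasing if `p ≥ q`, nonincreasing if `p ≤ q`; consequently its supremum and
infimum over `[-u, ∞)` are `max (q(v-u)²) (2pq(v-u)²)` and `min (q(v-u)²) (2pq(v-u)²)`
respectively, with `ψ(-u) = q (v-u)²`. -/
theorem psi_monotone_sup_inf (u v p : ℝ) (hu : 0 ≤ u) (huv : u < v)
    (hp : p ∈ Set.Ioo (0 : ℝ) 1) (q : ℝ) (hq : q = 1 - p)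
    (ψ : ℝ → ℝ)
    (hψ : ∀ c : ℝ, ψ c = p * (u + c) ^ 2 + q * (v + c) ^ 2 -
      (u + c) ^ (2 * p) * (v + c) ^ (2 * q)) :
    (q ≤ p → MonotoneOn ψ (Set.Ici (-u))) ∧
    (p ≤ q → AntitoneOn ψ (Set.Ici (-u))) ∧
    sSup (ψ '' Set.Ici (-u)) = max (q * (v - u) ^ 2) (2 * p * q * (v - u) ^ 2) ∧
    sInf (ψ '' Set.Ici (-u)) = min (q * (v - u) ^ 2) (2 * p * q * (v - u) ^ 2) ∧
    ψ (-u) = q * (v - u) ^ 2 := by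
  obtain ⟨hmono, hanti, hsup, hinf, hleft⟩ :=
    psi_monotone_sup_inf_general huv hp.1 (by linarith [hp.2]) (by linarith) hψ
  have hne : (ψ '' Ici (-u)).Nonempty := nonempty_Ici.image ψ
  exact ⟨hmono, hanti, hsup.csSup_eq hne, hinf.csInf_eq hne, hleft⟩
end

section
/- For any real numbers V and E with 0 < V < E: sup{ x̄ − (x₁⋯x_n)^{1/n} : n ∈ ℕ, y ∈ [0,∞)ⁿ, x_i = y_i² for all i, (1/n)·Σᵢ(y_i − ȳ)² ≤ V, (1/n)·Σᵢ(y_i − y_min)² ≤ E } = max(2V, E), where ȳ := (1/n)·Σᵢ y_i, x̄ := (1/n)·Σᵢ x_i, and y_min := minᵢ y_i. In particular, for any such n and y one has x̄ − (x₁⋯x_n)^{1/n} ≤ max(2V, E). -/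
open Real Finset

/-!
For the upper bound, move along the segment `y(t) = m + t (y - m)`, where `0 < m ≤ y_i`. Put
`d = y - m`, let `a` and `c` be the first and second moments of `d`, and let `κ` be the minimum of
`0` and `2 a² - c`. Then `max (2 Var y) c` is exactly the gap between the second moment
`m² + 2 m a + c` of `y` and `q(1)`, where `q(t) = m² + 2 m a t + κ t²`; so it suffices that the
geometric mean of `y(t)²` stays above `q(t)`. Both equal `m²` at `t = 0`, and the logarithmic
derivative of the geometric mean dominates that of `q`: by Cauchy-Schwarz it is at least
`2 a² / (m a + t c)`.

Both values in the maximum are reached, or approached, by tuples with all but one entry equal: a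
single zero entry gives `E`; one large deviation from a common value, in a tuple whose mean `K`
tends to infinity, gives `2 V`, since `log` is then quadratic to leading order around `K`.
-/

lemma le_of_hasDerivAt_nonneg {f f' : ℝ → ℝ} {a b : ℝ} (hab : a ≤ b)
    (hf : ∀ t ∈ Set.Icc a b, HasDerivAt f (f' t) t) (hf' : ∀ t ∈ Set.Icc a b, 0 ≤ f' t) :
    f a ≤ f b := by
  have hmono : MonotoneOn f (Set.Icc a b) :=
    monotoneOn_of_hasDerivWithinAt_nonneg (convex_Icc a b)
      (fun t ht ↦ (hf t ht).continuousAt.continuousWithinAt)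
      (fun t ht ↦ (hf t (interior_subset ht)).hasDerivWithinAt)
      (fun t ht ↦ hf' t (interior_subset ht))
  exact hmono (Set.left_mem_Icc.2 hab) (Set.right_mem_Icc.2 hab) hab

lemma hasDerivAt_add_mul (m d t : ℝ) : HasDerivAt (fun t ↦ m + t * d) d t := by
  simpa using ((hasDerivAt_id t).mul_const d).const_add m

lemma quadratic_pos_of_pos_of_pos {A B κ t : ℝ} (hκ : κ ≤ 0) (h0 : 0 < A) (h1 : 0 < A + B + κ)
    (ht : t ∈ Set.Icc (0 : ℝ) 1) : 0 < A + B * t + κ * t ^ 2 := by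
  have hcombo : 0 < (1 - t) * A + t * (A + B + κ) :=
    convex_Ioi (0 : ℝ) h0 h1 (sub_nonneg.2 ht.2) ht.1 (sub_add_cancel 1 t)
  have hconcave : 0 ≤ -κ * (t * (1 - t)) :=
    mul_nonneg (neg_nonneg.2 hκ) (mul_nonneg ht.1 (sub_nonneg.2 ht.2))
  linarith

section Weighted

variable {ι : Type*} {s : Finset ι} {w : ι → ℝ}

lemma sum_mul_sub_sq (hw1 : ∑ i ∈ s, w i = 1) (y : ι → ℝ) (c : ℝ) :
    ∑ i ∈ s, w i * (y i - c) ^ 2 =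
      ∑ i ∈ s, w i * y i ^ 2 - 2 * c * ∑ i ∈ s, w i * y i + c ^ 2 := by
  calc ∑ i ∈ s, w i * (y i - c) ^ 2
      = ∑ i ∈ s, (w i * y i ^ 2 - 2 * c * (w i * y i) + w i * c ^ 2) :=
        sum_congr rfl fun i _ ↦ by ring
    _ = ∑ i ∈ s, w i * y i ^ 2 - 2 * c * ∑ i ∈ s, w i * y i + c ^ 2 := by
        rw [sum_add_distrib, sum_sub_distrib, ← mul_sum, ← sum_mul, hw1, one_mul]

lemma log_prod_sq_rpow {y : ι → ℝ} (hy : ∀ i ∈ s, 0 < y i) :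
    log (∏ i ∈ s, (y i ^ 2) ^ w i) = 2 * ∑ i ∈ s, w i * log (y i) := by
  have hsq : ∀ i ∈ s, 0 < y i ^ 2 := fun i hi ↦ pow_pos (hy i hi) 2
  rw [log_prod fun i hi ↦ (rpow_pos_of_pos (hsq i hi) _).ne', mul_sum]
  refine sum_congr rfl fun i hi ↦ ?_
  rw [log_rpow (hsq i hi), log_pow]
  push_cast
  ring

lemma sq_sum_mul_le_mul_sum_mul_div {d : ι → ℝ} {m t : ℝ} (hw : ∀ i ∈ s, 0 ≤ w i)
    (hd : ∀ i ∈ s, 0 ≤ d i) (hm : 0 < m) (ht : 0 ≤ t) :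
    (∑ i ∈ s, w i * d i) ^ 2 ≤
      (m * ∑ i ∈ s, w i * d i + t * ∑ i ∈ s, w i * d i ^ 2) *
        ∑ i ∈ s, w i * (d i / (m + t * d i)) := by
  have hpos : ∀ i ∈ s, 0 < m + t * d i := fun i hi ↦
    add_pos_of_pos_of_nonneg hm (mul_nonneg ht (hd i hi))
  calc (∑ i ∈ s, w i * d i) ^ 2
      ≤ (∑ i ∈ s, w i * (d i * (m + t * d i))) * ∑ i ∈ s, w i * (d i / (m + t * d i)) := by
        refine sum_sq_le_sum_mul_sum_of_sq_le_mul s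
          (fun i hi ↦ mul_nonneg (hw i hi) (mul_nonneg (hd i hi) (hpos i hi).le))
          (fun i hi ↦ mul_nonneg (hw i hi) (div_nonneg (hd i hi) (hpos i hi).le))
          fun i hi ↦ le_of_eq ?_
        have hcancel : (m + t * d i) * (d i / (m + t * d i)) = d i :=
          mul_div_cancel₀ _ (hpos i hi).ne'
        linear_combination -(w i ^ 2 * d i) * hcancel
    _ = _ := by
        congr 1
        rw [mul_sum, mul_sum, ← sum_add_distrib]
        exact sum_congr rfl fun i _ ↦ by ring

lemma add_mul_le_mul_quadratic {a c m t κ l : ℝ} (ha : 0 ≤ a) (hac : a ^ 2 ≤ c) (hm : 0 < m)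
    (ht : 0 ≤ t) (hκ0 : κ ≤ 0) (hκ : κ ≤ 2 * a ^ 2 - c) (hl0 : 0 ≤ l)
    (hl : a ^ 2 ≤ (m * a + t * c) * l) (hq : 0 ≤ m ^ 2 + 2 * m * a * t + κ * t ^ 2) :
    m * a + κ * t ≤ l * (m ^ 2 + 2 * m * a * t + κ * t ^ 2) := by
  rcases ha.eq_or_lt with rfl | ha
  · calc m * 0 + κ * t ≤ 0 := by linarith [mul_nonpos_of_nonpos_of_nonneg hκ0 ht]
      _ ≤ _ := mul_nonneg hl0 hq
  have hden : 0 < m * a + t * c :=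
    add_pos_of_pos_of_nonneg (mul_pos hm ha) (mul_nonneg ht ((sq_nonneg a).trans hac))
  have hquad : (m * a + t * c) * (m * a + κ * t) ≤
      a ^ 2 * (m ^ 2 + 2 * m * a * t + κ * t ^ 2) := by
    have h₁ : 0 ≤ m * a * t * (2 * a ^ 2 - c - κ) := mul_nonneg (by positivity) (by linarith)
    have h₂ : 0 ≤ t ^ 2 * (-κ * (c - a ^ 2)) :=
      mul_nonneg (sq_nonneg t) (mul_nonneg (by linarith) (by linarith))
    linarith
  refine le_of_mul_le_mul_left ?_ hden
  calc (m * a + t * c) * (m * a + κ * t)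
      ≤ a ^ 2 * (m ^ 2 + 2 * m * a * t + κ * t ^ 2) := hquad
    _ ≤ (m * a + t * c) * l * (m ^ 2 + 2 * m * a * t + κ * t ^ 2) :=
        mul_le_mul_of_nonneg_right hl hq
    _ = (m * a + t * c) * (l * (m ^ 2 + 2 * m * a * t + κ * t ^ 2)) := by ring

lemma hasDerivAt_sum_mul_log {d : ι → ℝ} {m t : ℝ} (hpos : ∀ i ∈ s, 0 < m + t * d i) :
    HasDerivAt (fun t ↦ ∑ i ∈ s, w i * log (m + t * d i))
      (∑ i ∈ s, w i * (d i / (m + t * d i))) t :=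
  HasDerivAt.fun_sum fun i hi ↦
    ((hasDerivAt_add_mul m (d i) t).log (hpos i hi).ne').const_mul (w i)

lemma log_quadratic_le_sum_mul_log {d : ι → ℝ} {m κ : ℝ} (hw : ∀ i ∈ s, 0 ≤ w i)
    (hw1 : ∑ i ∈ s, w i = 1) (hd : ∀ i ∈ s, 0 ≤ d i) (hm : 0 < m) (hκ0 : κ ≤ 0)
    (hκ : κ ≤ 2 * (∑ i ∈ s, w i * d i) ^ 2 - ∑ i ∈ s, w i * d i ^ 2)
    (hq1 : 0 < m ^ 2 + 2 * m * ∑ i ∈ s, w i * d i + κ) :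
    log (m ^ 2 + 2 * m * ∑ i ∈ s, w i * d i + κ) ≤ 2 * ∑ i ∈ s, w i * log (m + d i) := by
  have hac := pow_arith_mean_le_arith_mean_pow_of_even s w d hw hw1 even_two
  have hcauchy := fun t (ht : 0 ≤ t) ↦ sq_sum_mul_le_mul_sum_mul_div hw hd hm ht
  have ha : 0 ≤ ∑ i ∈ s, w i * d i := sum_nonneg fun i hi ↦ mul_nonneg (hw i hi) (hd i hi)
  set a := ∑ i ∈ s, w i * d i
  set c := ∑ i ∈ s, w i * d i ^ 2
  let q : ℝ → ℝ := fun t ↦ m ^ 2 + 2 * m * a * t + κ * t ^ 2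
  let l : ℝ → ℝ := fun t ↦ ∑ i ∈ s, w i * (d i / (m + t * d i))
  have hpos : ∀ t ∈ Set.Icc (0 : ℝ) 1, ∀ i ∈ s, 0 < m + t * d i := fun t ht i hi ↦
    add_pos_of_pos_of_nonneg hm (mul_nonneg ht.1 (hd i hi))
  have hq : ∀ t ∈ Set.Icc (0 : ℝ) 1, 0 < q t := fun t ht ↦
    quadratic_pos_of_pos_of_pos hκ0 (pow_pos hm 2) hq1 ht
  have hderiv : ∀ t ∈ Set.Icc (0 : ℝ) 1,
      HasDerivAt (fun t ↦ 2 * ∑ i ∈ s, w i * log (m + t * d i) - log (q t))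
        (2 * l t - (2 * m * a + κ * (2 * t)) / q t) t := by
    intro t ht
    have hlin : HasDerivAt (fun t ↦ m ^ 2 + 2 * m * a * t) (2 * m * a) t := by
      simpa using ((hasDerivAt_id t).const_mul (2 * m * a)).const_add (m ^ 2)
    have hsq : HasDerivAt (fun t ↦ κ * t ^ 2) (κ * (2 * t)) t := by
      simpa using (hasDerivAt_pow 2 t).const_mul κ
    exact ((hasDerivAt_sum_mul_log (hpos t ht)).const_mul 2).sub ((hlin.add hsq).log (hq t ht).ne')
  have hslope : ∀ t ∈ Set.Icc (0 : ℝ) 1, 0 ≤ 2 * l t - (2 * m * a + κ * (2 * t)) / q t := by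
    intro t ht
    have hl0 : 0 ≤ l t := sum_nonneg fun i hi ↦
      mul_nonneg (hw i hi) (div_nonneg (hd i hi) (hpos t ht i hi).le)
    have h := add_mul_le_mul_quadratic ha hac hm ht.1 hκ0 hκ hl0 (hcauchy t ht.1) (hq t ht).le
    rw [sub_nonneg, div_le_iff₀ (hq t ht)]
    simp only [q]
    linarith
  have h := le_of_hasDerivAt_nonneg zero_le_one hderiv hslope
  have h0 : 2 * ∑ i ∈ s, w i * log m - log (m ^ 2) = 0 := by
    rw [← sum_mul, hw1, log_pow]; push_cast; ring
  simp only [q, zero_mul, add_zero, mul_zero, one_mul, mul_one, ne_eq, OfNat.ofNat_ne_zero,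
    not_false_eq_true, zero_pow, one_pow, h0] at h
  linarith

theorem arith_sub_geom_le_max {y : ι → ℝ} {m : ℝ} (hw : ∀ i ∈ s, 0 ≤ w i)
    (hw1 : ∑ i ∈ s, w i = 1) (hm : 0 ≤ m) (hmy : ∀ i ∈ s, m ≤ y i) :
    ∑ i ∈ s, w i * y i ^ 2 - ∏ i ∈ s, (y i ^ 2) ^ w i ≤
      max (2 * ∑ i ∈ s, w i * (y i - ∑ j ∈ s, w j * y j) ^ 2)
        (∑ i ∈ s, w i * (y i - m) ^ 2) := by
  have hgeom : 0 ≤ ∏ i ∈ s, (y i ^ 2) ^ w i :=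
    prod_nonneg fun i _ ↦ rpow_nonneg (sq_nonneg _) _
  rcases hm.eq_or_lt with rfl | hm
  · refine le_max_of_le_right ?_
    simp only [sub_zero]
    linarith
  have hvar := sum_mul_sub_sq hw1 y (∑ j ∈ s, w j * y j)
  have hsecond := sum_mul_sub_sq hw1 y m
  have hfirst : ∑ i ∈ s, w i * (y i - m) = ∑ i ∈ s, w i * y i - m := by
    simp only [mul_sub, sum_sub_distrib, ← sum_mul, hw1, one_mul]
  have hlog := fun κ ↦ log_quadratic_le_sum_mul_log (κ := κ) hw hw1
    (fun i hi ↦ sub_nonneg.2 (hmy i hi)) hm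
  simp only [add_sub_cancel, hfirst] at hlog
  rw [← log_prod_sq_rpow fun i hi ↦ hm.trans_le (hmy i hi)] at hlog
  set μ := ∑ i ∈ s, w i * y i
  set κ := min 0 (2 * (μ - m) ^ 2 - ∑ i ∈ s, w i * (y i - m) ^ 2)
  have hquad : m ^ 2 + 2 * m * (μ - m) + κ ≤ ∏ i ∈ s, (y i ^ 2) ^ w i := by
    rcases le_or_gt (m ^ 2 + 2 * m * (μ - m) + κ) 0 with hq | hq
    · exact hq.trans hgeom
    · have hprod : 0 < ∏ i ∈ s, (y i ^ 2) ^ w i := prod_pos fun i hi ↦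
        rpow_pos_of_pos (pow_pos (hm.trans_le (hmy i hi)) 2) _
      exact (log_le_log_iff hq hprod).1 (hlog κ (min_le_left _ _) (min_le_right _ _) hq)
  rw [le_max_iff]
  rcases min_choice 0 (2 * (μ - m) ^ 2 - ∑ i ∈ s, w i * (y i - m) ^ 2) with h | h
  · right; linarith
  · left; linarith

lemma log_le_log_add_sub_sq {x μ M : ℝ} (hx : 0 < x) (hμ : 0 < μ) (hxM : x ≤ M) (hμM : μ ≤ M) :
    log x ≤ log μ + (x - μ) / μ - (x - μ) ^ 2 / (2 * (μ * M)) := by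
  have hM : 0 < M := hμ.trans_le hμM
  have hmem : ∀ t ∈ Set.Icc (0 : ℝ) 1, μ + t * (x - μ) ∈ Set.Ioc 0 M := fun t ht ↦
    (convex_Ioc 0 M).add_smul_sub_mem ⟨hμ, hμM⟩ ⟨hx, hxM⟩ ht
  have hderiv : ∀ t ∈ Set.Icc (0 : ℝ) 1,
      HasDerivAt
        (fun t ↦ t * ((x - μ) / μ) - t ^ 2 * ((x - μ) ^ 2 / (2 * (μ * M))) -
          log (μ + t * (x - μ)))
        (t * (x - μ) ^ 2 / μ * (1 / (μ + t * (x - μ)) - 1 / M)) t := by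
    intro t ht
    have hne := (hmem t ht).1.ne'
    refine ((((hasDerivAt_id' t).mul_const _).sub ((hasDerivAt_pow 2 t).mul_const _)).sub
      ((hasDerivAt_add_mul μ (x - μ) t).log hne)).congr_deriv ?_
    obtain ⟨z, hz⟩ : ∃ z, z = μ + t * (x - μ) := ⟨_, rfl⟩
    rw [← hz] at hne ⊢
    field_simp
    linear_combination 2 * (x - μ) * M * hz
  have hslope : ∀ t ∈ Set.Icc (0 : ℝ) 1,
      0 ≤ t * (x - μ) ^ 2 / μ * (1 / (μ + t * (x - μ)) - 1 / M) := fun t ht ↦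
    mul_nonneg (div_nonneg (mul_nonneg ht.1 (sq_nonneg _)) hμ.le)
      (sub_nonneg.2 (one_div_le_one_div_of_le (hmem t ht).1 (hmem t ht).2))
  have h := le_of_hasDerivAt_nonneg zero_le_one hderiv hslope
  simp only [zero_mul, ne_eq, OfNat.ofNat_ne_zero, not_false_eq_true, zero_pow, add_zero,
    sub_zero, one_mul, one_pow, add_sub_cancel] at h
  linarith

lemma prod_sq_rpow_le_exp {y : ι → ℝ} {μ M : ℝ} (hw : ∀ i ∈ s, 0 ≤ w i)
    (hw1 : ∑ i ∈ s, w i = 1) (hy : ∀ i ∈ s, y i ∈ Set.Ioc 0 M)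
    (hmean : ∑ i ∈ s, w i * y i = μ) :
    ∏ i ∈ s, (y i ^ 2) ^ w i ≤
      μ ^ 2 * exp (-(∑ i ∈ s, w i * (y i - μ) ^ 2) / (μ * M)) := by
  obtain ⟨hμ, hμM⟩ : μ ∈ Set.Ioc 0 M := hmean ▸ (convex_Ioc 0 M).sum_mem hw hw1 hy
  have hM : 0 < M := hμ.trans_le hμM
  have hcentred : ∑ i ∈ s, w i * (y i - μ) = 0 := by
    simp only [mul_sub, sum_sub_distrib, ← sum_mul, hw1, hmean, one_mul, sub_self]
  have hlog : ∑ i ∈ s, w i * log (y i) ≤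
      log μ - (∑ i ∈ s, w i * (y i - μ) ^ 2) / (2 * (μ * M)) := by
    calc ∑ i ∈ s, w i * log (y i)
        ≤ ∑ i ∈ s, w i * (log μ + (y i - μ) / μ - (y i - μ) ^ 2 / (2 * (μ * M))) :=
          sum_le_sum fun i hi ↦ mul_le_mul_of_nonneg_left
            (log_le_log_add_sub_sq (hy i hi).1 hμ (hy i hi).2 hμM) (hw i hi)
      _ = log μ - (∑ i ∈ s, w i * (y i - μ) ^ 2) / (2 * (μ * M)) := by
          simp only [mul_sub _ (_ + _), mul_add, sum_sub_distrib, sum_add_distrib, ← mul_div_assoc,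
            ← sum_div, ← sum_mul, hw1, hcentred, one_mul, zero_div, add_zero]
  have hprod : 0 < ∏ i ∈ s, (y i ^ 2) ^ w i :=
    prod_pos fun i hi ↦ rpow_pos_of_pos (pow_pos (hy i hi).1 2) _
  rw [← log_le_log_iff hprod (by positivity), log_prod_sq_rpow fun i hi ↦ (hy i hi).1,
    log_mul (by positivity) (exp_pos _).ne', log_exp, log_pow]
  calc 2 * ∑ i ∈ s, w i * log (y i)
      ≤ 2 * (log μ - (∑ i ∈ s, w i * (y i - μ) ^ 2) / (2 * (μ * M))) := by gcongr
    _ = _ := by push_cast; field_simp; ring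

theorem le_arith_sub_geom {y : ι → ℝ} {μ v M : ℝ} (hw : ∀ i ∈ s, 0 ≤ w i)
    (hw1 : ∑ i ∈ s, w i = 1) (hy : ∀ i ∈ s, y i ∈ Set.Ioc 0 M)
    (hmean : ∑ i ∈ s, w i * y i = μ) (hvar : ∑ i ∈ s, w i * (y i - μ) ^ 2 = v) :
    v + v * (μ ^ 2 / (μ * M + v)) ≤ ∑ i ∈ s, w i * y i ^ 2 - ∏ i ∈ s, (y i ^ 2) ^ w i := by
  obtain ⟨hμ, hμM⟩ : μ ∈ Set.Ioc 0 M := hmean ▸ (convex_Ioc 0 M).sum_mem hw hw1 hy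
  have hM : 0 < M := hμ.trans_le hμM
  have hv : 0 ≤ v := hvar ▸ sum_nonneg fun i hi ↦ mul_nonneg (hw i hi) (sq_nonneg _)
  have hexp : exp (-v / (μ * M)) ≤ μ * M / (μ * M + v) := by
    calc exp (-v / (μ * M)) = (exp (v / (μ * M)))⁻¹ := by rw [neg_div, exp_neg]
      _ ≤ (v / (μ * M) + 1)⁻¹ := inv_anti₀ (by positivity) (add_one_le_exp _)
      _ = μ * M / (μ * M + v) := by field_simp; ring
  have hgeom : ∏ i ∈ s, (y i ^ 2) ^ w i ≤ μ ^ 2 * (μ * M / (μ * M + v)) :=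
    (hvar ▸ prod_sq_rpow_le_exp hw hw1 hy hmean).trans
      (mul_le_mul_of_nonneg_left hexp (sq_nonneg μ))
  have hsecond : ∑ i ∈ s, w i * y i ^ 2 = μ ^ 2 + v := by
    have h := sum_mul_sub_sq hw1 y μ
    rw [hvar, hmean] at h
    linarith
  calc v + v * (μ ^ 2 / (μ * M + v)) = μ ^ 2 + v - μ ^ 2 * (μ * M / (μ * M + v)) := by
        field_simp; ring
    _ ≤ _ := by rw [hsecond]; exact sub_le_sub_left hgeom _

end Weighted

section Uniform

/-- The constraints on the tuples over which the supremum is taken: nonnegative entries, variance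
at most `V`, and mean square deviation from the least entry at most `E`. -/
def IsAdmissible (V E : ℝ) {n : ℕ} (y : Fin (n + 1) → ℝ) : Prop :=
  (∀ i, 0 ≤ y i) ∧
    (1 / (n + 1) : ℝ) * ∑ i, (y i - (1 / (n + 1) : ℝ) * ∑ j, y j) ^ 2 ≤ V ∧
    (1 / (n + 1) : ℝ) * ∑ i, (y i - univ.inf' univ_nonempty y) ^ 2 ≤ E

/-- The difference between the arithmetic and the geometric mean of the squares of the entries of
a tuple: the quantity being maximized. -/
noncomputable def sqMeanGap {n : ℕ} (y : Fin (n + 1) → ℝ) : ℝ :=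
  (1 / (n + 1) : ℝ) * ∑ i, (y i) ^ 2 - (∏ i, (y i) ^ 2) ^ (1 / (n + 1) : ℝ)

lemma sum_uniform_weight (n : ℕ) : ∑ _i : Fin (n + 1), (1 / (n + 1) : ℝ) = 1 := by
  rw [sum_const, card_univ, Fintype.card_fin, nsmul_eq_mul]
  push_cast
  field_simp

lemma sqMeanGap_eq_sum_sub_prod {n : ℕ} (y : Fin (n + 1) → ℝ) :
    sqMeanGap y =
      ∑ i, (1 / (n + 1) : ℝ) * y i ^ 2 - ∏ i, (y i ^ 2) ^ (1 / (n + 1) : ℝ) := by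
  rw [sqMeanGap, mul_sum, finsetProd_rpow _ _ fun i _ ↦ sq_nonneg _]

theorem IsAdmissible.sqMeanGap_le {V E : ℝ} {n : ℕ} {y : Fin (n + 1) → ℝ}
    (hy : IsAdmissible V E y) : sqMeanGap y ≤ max (2 * V) E := by
  obtain ⟨hnonneg, hvar, hmin⟩ := hy
  rw [sqMeanGap_eq_sum_sub_prod]
  refine (arith_sub_geom_le_max (fun _ _ ↦ by positivity) (sum_uniform_weight n)
    ((le_inf'_iff univ_nonempty y).2 fun i _ ↦ hnonneg i) (fun i hi ↦ inf'_le y hi)).trans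
    (max_le_max ?_ ?_)
  · simpa only [← mul_sum] using mul_le_mul_of_nonneg_left hvar zero_le_two
  · simpa only [← mul_sum] using hmin

/-- The tuple with first entry `p` and `n` further entries `q`: the shape of the tuples showing
that the upper bound is optimal. -/
def spike {α : Type*} (n : ℕ) (p q : α) : Fin (n + 1) → α :=
  Fin.cons p fun _ ↦ q

lemma forall_spike {α : Type*} {n : ℕ} {p q : α} {P : α → Prop} (hp : P p) (hq : P q) :
    ∀ i, P (spike n p q i) :=
  Fin.cases hp fun _ ↦ hq

lemma mean_comp_spike {α : Type*} (n : ℕ) (p q : α) (f : α → ℝ) :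
    (1 / (n + 1) : ℝ) * ∑ i, f (spike n p q i) = (f p + n * f q) / (n + 1) := by
  simp only [spike, Fin.sum_univ_succ, Fin.cons_zero, Fin.cons_succ, sum_const, card_univ,
    Fintype.card_fin, nsmul_eq_mul]
  ring

lemma variance_spike (n : ℕ) (p q : ℝ) :
    (1 / (n + 1) : ℝ) * ∑ i, (spike n p q i - (p + n * q) / (n + 1)) ^ 2 =
      n * (p - q) ^ 2 / (n + 1) ^ 2 := by
  rw [mean_comp_spike n p q fun x ↦ (x - (p + n * q) / (n + 1)) ^ 2]
  field_simp
  ring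

lemma inf'_spike {α : Type*} [LinearOrder α] {n : ℕ} (hn : 0 < n) (p q : α) :
    univ.inf' univ_nonempty (spike n p q) = min p q :=
  le_antisymm (le_min (inf'_le _ (mem_univ 0)) (inf'_le _ (mem_univ (Fin.succ ⟨0, hn⟩))))
    (le_inf' _ _ fun i _ ↦ forall_spike (min_le_left p q) (min_le_right p q) i)

lemma isAdmissible_spike {V E p q : ℝ} {n : ℕ} (hn : 0 < n) (hp : 0 ≤ p) (hq : 0 ≤ q)
    (hV : n * (p - q) ^ 2 / (n + 1) ^ 2 ≤ V)
    (hE : ((p - min p q) ^ 2 + n * (q - min p q) ^ 2) / (n + 1) ≤ E) :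
    IsAdmissible V E (spike n p q) := by
  refine ⟨forall_spike hp hq, ?_, ?_⟩
  · rwa [mean_comp_spike n p q fun x ↦ x, variance_spike]
  · rwa [inf'_spike hn, mean_comp_spike n p q fun x ↦ (x - min p q) ^ 2]

lemma sqMeanGap_spike_zero (n : ℕ) (q : ℝ) : sqMeanGap (spike n 0 q) = n * q ^ 2 / (n + 1) := by
  have hprod : ∏ i, spike n 0 q i ^ 2 = 0 :=
    prod_eq_zero (mem_univ 0) (by simp only [spike, Fin.cons_zero, ne_eq, OfNat.ofNat_ne_zero,
      not_false_eq_true, zero_pow])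
  rw [sqMeanGap, hprod, zero_rpow (by positivity), mean_comp_spike n 0 q fun x ↦ x ^ 2]
  ring

lemma exists_isAdmissible_sqMeanGap_eq {V E : ℝ} (hV : 0 < V) (hE : 0 ≤ E) :
    ∃ (n : ℕ) (y : Fin (n + 1) → ℝ), IsAdmissible V E y ∧ sqMeanGap y = E := by
  obtain ⟨n, hn⟩ := exists_nat_gt (E / V)
  have hn0 : (0 : ℝ) < n := (div_nonneg hE hV.le).trans_lt hn
  set q := √(E * (n + 1) / n)
  have hq : n * q ^ 2 = E * (n + 1) := by
    rw [sq_sqrt (by positivity)]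
    field_simp
  have hq0 : 0 ≤ q := sqrt_nonneg _
  refine ⟨n, spike n 0 q, isAdmissible_spike (by exact_mod_cast hn0) le_rfl hq0 ?_ ?_, ?_⟩
  · rw [zero_sub, neg_sq, hq, div_le_iff₀ (by positivity)]
    have hE_lt : E < n * V := (div_lt_iff₀ hV).1 hn
    calc E * (n + 1) ≤ V * (n + 1) * (n + 1) := by gcongr; linarith
      _ = V * (n + 1) ^ 2 := by ring
  · rw [min_eq_left hq0, sub_zero, sub_zero, hq]
    refine le_of_eq ?_
    field_simp
    ring
  · rw [sqMeanGap_spike_zero, hq]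
    field_simp

lemma le_sqMeanGap_spike {n : ℕ} {K a : ℝ} (ha : 0 ≤ a) (haK : a < K) :
    n * a ^ 2 + n * a ^ 2 * (K ^ 2 / (K * (K + n * a) + n * a ^ 2)) ≤
      sqMeanGap (spike n (K + n * a) (K - a)) := by
  have hK : 0 < K := ha.trans_lt haK
  have hna : 0 ≤ n * a := by positivity
  have hmean : (K + n * a + n * (K - a)) / (n + 1) = K := by field_simp; ring
  rw [sqMeanGap_eq_sum_sub_prod]
  refine le_arith_sub_geom (fun _ _ ↦ by positivity) (sum_uniform_weight n)
    (fun i _ ↦ forall_spike ?_ ?_ i) ?_ ?_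
  · exact ⟨by positivity, le_rfl⟩
  · exact ⟨sub_pos.2 haK, by linarith⟩
  · rw [← mul_sum, mean_comp_spike n _ _ fun x ↦ x, hmean]
  · have h := variance_spike n (K + n * a) (K - a)
    rw [hmean] at h
    rw [← mul_sum, h]
    field_simp
    ring

lemma tendsto_sq_div_mul_add (b c : ℝ) :
    Filter.Tendsto (fun K : ℝ ↦ K ^ 2 / (K * (K + b) + c)) Filter.atTop (nhds 1) := by
  have h : Filter.Tendsto (fun K : ℝ ↦ (1 + b / K + c / K ^ 2)⁻¹) Filter.atTop (nhds 1) := by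
    have hb : Filter.Tendsto (fun K : ℝ ↦ b / K) Filter.atTop (nhds 0) :=
      tendsto_const_nhds.div_atTop Filter.tendsto_id
    have hc : Filter.Tendsto (fun K : ℝ ↦ c / K ^ 2) Filter.atTop (nhds 0) :=
      tendsto_const_nhds.div_atTop (Filter.tendsto_pow_atTop two_ne_zero)
    simpa using ((hb.const_add 1).add hc).inv₀ (by norm_num)
  refine h.congr' ?_
  filter_upwards [Filter.eventually_gt_atTop 0] with K hK
  rw [show K * (K + b) + c = K ^ 2 * (1 + b / K + c / K ^ 2) by field_simp,
    div_mul_cancel_left₀ (by positivity)]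

lemma exists_isAdmissible_lt_sqMeanGap {V E β : ℝ} (hV : 0 ≤ V) (hVE : V < E) (hβ : β < 2 * V) :
    ∃ (n : ℕ) (y : Fin (n + 1) → ℝ), IsAdmissible V E y ∧ β < sqMeanGap y := by
  have hEV : 0 < E - V := sub_pos.2 hVE
  obtain ⟨n, hn⟩ := exists_nat_gt (V / (E - V))
  have hn0 : (0 : ℝ) < n := (div_nonneg hV hEV.le).trans_lt hn
  set a := √(V / n)
  have hna : n * a ^ 2 = V := by
    rw [sq_sqrt (by positivity)]
    field_simp
  have ha : 0 ≤ a := sqrt_nonneg _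
  have hlim : Filter.Tendsto (fun K ↦ V + V * (K ^ 2 / (K * (K + n * a) + V))) Filter.atTop
      (nhds (2 * V)) := by
    simpa [two_mul] using ((tendsto_sq_div_mul_add (n * a) V).const_mul V).const_add V
  obtain ⟨K, hβK, haK⟩ :=
    ((hlim.eventually_const_lt hβ).and (Filter.eventually_gt_atTop a)).exists
  have hK : 0 < K := ha.trans_lt haK
  have hdiff : K + n * a - (K - a) = (n + 1) * a := by ring
  refine ⟨n, spike n (K + n * a) (K - a), isAdmissible_spike (by exact_mod_cast hn0)
    (by positivity) (sub_nonneg.2 haK.le) ?_ ?_, ?_⟩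
  · rw [hdiff, mul_pow, ← hna]
    refine le_of_eq ?_
    field_simp
  · have hmin : min (K + n * a) (K - a) = K - a := min_eq_right (by linarith [mul_nonneg hn0.le ha])
    rw [hmin, hdiff, sub_self]
    rw [div_lt_iff₀ hEV] at hn
    have ha2 : a ^ 2 ≤ E - V := le_of_mul_le_mul_left (by linarith) hn0
    calc (((n + 1) * a) ^ 2 + n * 0 ^ 2) / (n + 1) = n * a ^ 2 + a ^ 2 := by field_simp; ring
      _ ≤ E := by linarith
  · have h := le_sqMeanGap_spike (n := n) ha haK
    rw [hna] at h
    exact hβK.trans_le h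

end Uniform

/-- Corollary (arithmetic vs geometric means of finitely many numbers): for
`0 < V < E`, the supremum of `x̄ - (x₁⋯x_n)^{1/n}` over all `n ≥ 1` and all tuples
`y ∈ [0,∞)ⁿ` with `x_i = y_i²`, `(1/n)Σ(y_i - ȳ)² ≤ V` and `(1/n)Σ(y_i - y_min)² ≤ E`
equals `max (2V) E`; in particular every such tuple satisfies
`x̄ - (x₁⋯x_n)^{1/n} ≤ max (2V) E`. (Tuples are indexed by `Fin (n+1)` so that
`n + 1 ≥ 1` plays the role of the number `n ∈ ℕ` of entries.) -/
theorem sup_arith_sub_geom_finite (V E : ℝ) (hV : 0 < V) (hVE : V < E) :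
    sSup {d : ℝ | ∃ (n : ℕ) (y : Fin (n + 1) → ℝ),
        (∀ i, 0 ≤ y i) ∧
        (1 / (n + 1) : ℝ) * ∑ i, (y i - (1 / (n + 1) : ℝ) * ∑ j, y j) ^ 2 ≤ V ∧
        (1 / (n + 1) : ℝ) * ∑ i, (y i - univ.inf' univ_nonempty y) ^ 2 ≤ E ∧
        d = (1 / (n + 1) : ℝ) * ∑ i, (y i) ^ 2 -
          (∏ i, (y i) ^ 2) ^ (1 / (n + 1) : ℝ)} = max (2 * V) E ∧
    ∀ (n : ℕ) (y : Fin (n + 1) → ℝ), (∀ i, 0 ≤ y i) →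
      (1 / (n + 1) : ℝ) * ∑ i, (y i - (1 / (n + 1) : ℝ) * ∑ j, y j) ^ 2 ≤ V →
      (1 / (n + 1) : ℝ) * ∑ i, (y i - univ.inf' univ_nonempty y) ^ 2 ≤ E →
      (1 / (n + 1) : ℝ) * ∑ i, (y i) ^ 2 -
        (∏ i, (y i) ^ 2) ^ (1 / (n + 1) : ℝ) ≤ max (2 * V) E := by
  refine ⟨IsLUB.csSup_eq ⟨?_, fun u hu ↦ max_le ?_ ?_⟩ ?_,
    fun n y hy hvar hmin ↦ IsAdmissible.sqMeanGap_le ⟨hy, hvar, hmin⟩⟩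
  · rintro _ ⟨n, y, hy, hvar, hmin, rfl⟩
    exact IsAdmissible.sqMeanGap_le ⟨hy, hvar, hmin⟩
  · refine le_of_forall_lt fun β hβ ↦ ?_
    obtain ⟨n, y, ⟨hy, hvar, hmin⟩, hlt⟩ := exists_isAdmissible_lt_sqMeanGap hV.le hVE hβ
    exact hlt.trans_le (hu ⟨n, y, hy, hvar, hmin, rfl⟩)
  · obtain ⟨n, y, ⟨hy, hvar, hmin⟩, heq⟩ := exists_isAdmissible_sqMeanGap_eq hV (hV.trans hVE).le
    exact hu ⟨n, y, hy, hvar, hmin, heq.symm⟩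
  · obtain ⟨n, y, ⟨hy, hvar, hmin⟩, -⟩ := exists_isAdmissible_sqMeanGap_eq hV (hV.trans hVE).le
    exact ⟨_, n, y, hy, hvar, hmin, rfl⟩
end
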